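/- arXiv:2505.14205 — 3 statements merged into one kernel-verified Lean document; each statement's English description precedes it below -/
import Mathlib

section
/- Let S and T be commuting homeomorphisms of a compact metric space X such that both (X,S) and (X,T) are minimal. Then N_d(X,S) = N_d(X,T) for each d ∈ ℕ. -/
/-- `N_d(X,T)`: the closure in `X^d` of
`{(T^n x, T^{2n} x, …, T^{dn} x) : x ∈ X, n ∈ ℤ}`,
where `T` is a homeomorphism of the metric space `X`. -/
def Nd {X : Type*} [MetricSpace X] (T : X ≃ₜ X) (d : ℕ) : Set (Fin d → X) :=
  closure {f | ∃ x : X, ∃ n : ℤ,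
    ∀ i : Fin d, f i = (T.toEquiv ^ (((i : ℕ) + 1 : ℤ) * n)) x}

/-!
For a minimal `T`, the set `N_d(X, T)` is the closure of the orbit of the diagonal under the group
of arithmetic progressions `(T^a, T^(a+b), …, T^(a+(d-1)b))`, and by Glasner's theorem it is a
minimal set of this group. By symmetry it suffices that it contains `(x, S x, …, S^(d-1) x)` for
every `x` and every `S` commuting with `T`, which is proved by induction on `d = D + 2`.

Let `L = (D + 1)!` and let `Z` be a minimal set of `T^L`. Some `g = T^a S` preserves `Z`, and `S`
may be replaced by `g`. The induction hypothesis, applied to `T^L` and `g` on `Z`, yields two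
parallel progressions, close to `g^(i+1) x` and to `g^i x` at the times `(i+1)L` and `iL`, and
hence a point `(y, g x, …, g^(D+1) x)` of `N_d(X, T)`. It remains to replace `y` by `x`.

To free the coordinate `0`, twist a progression by multiples of `t - r`, successively for
`r = 1, …, D`. The twist does not change the coordinate at time `r`, and by minimality the
projection forgetting this coordinate is semi-open; so it may be forgotten, at the price of having
two copies of all the others. In the end only the times `0` and `D + 1` are left, and `x` may be put
at time `0` as soon as finitely many translates of `x` return to a given open set. The two parallel
progressions provide these returns, because minimality of the hull allows one of them to be made
constant.
-/

open Set Topology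

section InvariantSets

variable {Y α : Type*} [TopologicalSpace Y]

theorem exists_minimal_invariant_subset [CompactSpace Y] (act : α → Y → Y) {C : Set Y}
    (hC : IsClosed C) (hne : C.Nonempty) (hinv : ∀ a, MapsTo (act a) C C) :
    ∃ M ⊆ C, Minimal (fun A : Set Y ↦ IsClosed A ∧ A.Nonempty ∧ ∀ a, MapsTo (act a) A A) M := by
  refine zorn_superset_nonempty
    {A : Set Y | IsClosed A ∧ A.Nonempty ∧ ∀ a, MapsTo (act a) A A}
    (fun c hc hchain hcne ↦ ⟨⋂₀ c, ⟨?_, ?_, ?_⟩, ?_⟩) C ⟨hC, hne, hinv⟩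
  · exact isClosed_sInter fun A hA ↦ (hc hA).1
  · have : Nonempty c := hcne.coe_sort
    have hdir : DirectedOn (fun A B : Set Y ↦ A ⊇ B) c := IsChain.directedOn hchain.symm
    exact IsCompact.nonempty_sInter_of_directed_nonempty_isCompact_isClosed hdir
      (fun A hA ↦ (hc hA).2.1) (fun A hA ↦ (hc hA).1.isCompact) (fun A hA ↦ (hc hA).1)
  · exact fun a y hy A hA ↦ (hc hA).2.2 a (hy A hA)
  · exact fun A hA ↦ sInter_subset_of_mem hA

end InvariantSets

section RightTopologicalSemigroup

variable {M : Type*} [Semigroup M] [TopologicalSpace M]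

theorem mul_mem_closure_range_of_map_add {H : Type*} [Add H] (hright : ∀ r : M, Continuous (· * r))
    {τ : H → M} (hadd : ∀ a b, τ (a + b) = τ a * τ b) (hleft : ∀ a, Continuous (τ a * ·)) :
    ∀ p ∈ closure (range τ), ∀ q ∈ closure (range τ), p * q ∈ closure (range τ) := by
  intro p hp q hq
  have hτq : ∀ t ∈ range τ, t * q ∈ closure (range τ) := by
    rintro _ ⟨a, rfl⟩
    refine map_mem_closure (hleft a) hq ?_
    rintro _ ⟨b, rfl⟩
    exact ⟨a + b, hadd a b⟩
  simpa only [closure_closure] using map_mem_closure (f := (· * q)) (hright q) hp hτq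

variable [CompactSpace M] [T2Space M]

theorem exists_minimal_idempotent (hright : ∀ r : M, Continuous (· * r)) {E : Set M}
    (hE : IsClosed E) (hne : E.Nonempty) (hmul : ∀ a ∈ E, ∀ b ∈ E, a * b ∈ E) :
    ∃ v ∈ E, v * v = v ∧ ∀ e ∈ E, e * e = e → e * v = e → v * e = e → e = v := by
  obtain ⟨I, hIE, ⟨hI, hIne, hIinv⟩, hImin⟩ := exists_minimal_invariant_subset
    (fun (a : E) (y : M) ↦ a * y) hE hne fun a y hy ↦ hmul a a.2 y hy
  obtain ⟨v, hvI, hv⟩ := exists_idempotent_in_compact_subsemigroup hright I hIne hI.isCompact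
    fun a ha b hb ↦ hIinv ⟨a, hIE ha⟩ hb
  refine ⟨v, hIE hvI, hv, fun e he hee hev hve ↦ ?_⟩
  have heI : e ∈ I := hev ▸ hIinv ⟨e, he⟩ hvI
  have hideal : I ⊆ (· * e) '' E := by
    refine hImin ⟨(hE.isCompact.image (hright e)).isClosed, ⟨_, e, he, rfl⟩, ?_⟩ ?_
    · rintro a _ ⟨b, hb, rfl⟩
      exact ⟨a * b, hmul a a.2 b hb, mul_assoc ..⟩
    · rintro _ ⟨a, ha, rfl⟩
      exact hIinv ⟨a, ha⟩ heI
  obtain ⟨r, -, hr⟩ : v ∈ (· * e) '' E := hideal hvI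
  calc e = v * e := hve.symm
    _ = r * (e * e) := by rw [← mul_assoc]; exact congrArg (· * e) hr.symm
    _ = v := by rw [hee]; exact hr

theorem exists_mul_mul_const_eq_const {ι : Type*} (hright : ∀ r : M, Continuous (· * r))
    {E : Set M} {v : M} (hv : v * v = v)
    (hvmin : ∀ e ∈ E, e * e = e → e * v = e → v * e = e → e = v)
    {G : Set (ι → M)} (hG : IsClosed G) (hGmul : ∀ p ∈ G, ∀ q ∈ G, p * q ∈ G)
    (hGE : ∀ p ∈ G, ∀ i, p i ∈ E) (hvG : (fun _ ↦ v) ∈ G) {p : ι → M} (hp : p ∈ G) :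
    ∃ q ∈ G, q * (p * fun _ ↦ v) = fun _ ↦ v := by
  set V : ι → M := fun _ ↦ v
  have hright' : ∀ r : ι → M, Continuous (· * r) := fun r ↦
    continuous_pi fun i ↦ (hright (r i)).comp (continuous_apply i)
  have hVV : V * V = V := funext fun _ ↦ hv
  obtain ⟨_, ⟨q, hq, rfl⟩, hidem⟩ := exists_idempotent_in_compact_subsemigroup hright'
    ((· * (p * V)) '' G) ⟨_, p, hp, rfl⟩ (hG.isCompact.image (hright' _)) (by
      rintro _ ⟨a, ha, rfl⟩ _ ⟨b, hb, rfl⟩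
      exact ⟨a * (p * V) * b, hGmul _ (hGmul a ha _ (hGmul p hp V hvG)) b hb, mul_assoc ..⟩)
  simp only at hidem
  set w := q * (p * V)
  have hwV : w * V = w := by simp only [w, mul_assoc, hVV]
  have hVw : V * w ∈ G := hGmul V hvG w (hGmul q hq _ (hGmul p hp V hvG))
  have hVwVw : V * w * (V * w) = V * w := by
    calc V * w * (V * w) = V * (w * V * w) := by simp only [mul_assoc]
      _ = V * w := by rw [hwV, hidem]
  have hVwV : V * w * V = V * w := by rw [mul_assoc, hwV]
  have hVVw : V * (V * w) = V * w := by rw [← mul_assoc, hVV]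
  have hVw_eq : V * w = V := funext fun i ↦ hvmin _ (hGE _ hVw i) (congrFun hVwVw i :)
    (congrFun hVwV i :) (congrFun hVVw i :)
  exact ⟨V * q, hGmul V hvG q hq, by rw [mul_assoc]; exact hVw_eq⟩

end RightTopologicalSemigroup

section MinimalSets

variable {G Y : Type*} [TopologicalSpace Y] [AddMonoid G] [AddAction G Y]

variable (G) in
/-- A minimal set of the action of `G` on `Y`: a nonempty closed invariant set in which every orbit
is dense. Closedness and invariance are encoded by requiring orbit closures to be equal to `M`. -/
def IsMinimalSet (M : Set Y) : Prop :=
  M.Nonempty ∧ ∀ y ∈ M, closure (AddAction.orbit G y) = M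

theorem IsMinimalSet.isClosed {M : Set Y} (hM : IsMinimalSet G M) : IsClosed M := by
  obtain ⟨⟨y, hy⟩, horbit⟩ := hM
  exact horbit y hy ▸ isClosed_closure

theorem IsMinimalSet.vadd_mem {M : Set Y} (hM : IsMinimalSet G M) (a : G) {y : Y} (hy : y ∈ M) :
    a +ᵥ y ∈ M := by
  rw [← hM.2 y hy]
  exact subset_closure (AddAction.mem_orbit y a)

theorem IsMinimalSet.subset_of_isClosed {M C : Set Y} (hM : IsMinimalSet G M) (hC : IsClosed C)
    (hinv : ∀ (a : G), ∀ y ∈ C, a +ᵥ y ∈ C) {y : Y} (hyM : y ∈ M) (hyC : y ∈ C) : M ⊆ C := by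
  rw [← hM.2 y hyM]
  exact closure_minimal (range_subset_iff.2 fun a ↦ hinv a y hyC) hC

theorem IsMinimalSet.mapsTo {M : Set Y} (hM : IsMinimalSet G M) {g : Y → Y} (hg : Continuous g)
    (hcomm : ∀ (a : G) y, g (a +ᵥ y) = a +ᵥ g y) {y : Y} (hy : y ∈ M) (hgy : g y ∈ M) :
    MapsTo g M M :=
  hM.subset_of_isClosed (hM.isClosed.preimage hg)
    (fun a z hz ↦ mem_preimage.2 (hcomm a z ▸ hM.vadd_mem a hz)) hy hgy

theorem closure_orbit_subset_of_mem [ContinuousConstVAdd G Y] {y z : Y}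
    (hz : z ∈ closure (AddAction.orbit G y)) :
    closure (AddAction.orbit G z) ⊆ closure (AddAction.orbit G y) :=
  closure_minimal (range_subset_iff.2 fun a ↦ vadd_closure_orbit_subset a y ⟨z, hz, rfl⟩)
    isClosed_closure

theorem exists_isMinimalSet [ContinuousConstVAdd G Y] [CompactSpace Y] [Nonempty Y] :
    ∃ M : Set Y, IsMinimalSet G M := by
  obtain ⟨M, -, ⟨hM, hne, hinv⟩, hmin⟩ := exists_minimal_invariant_subset
    (fun (a : G) (y : Y) ↦ a +ᵥ y) isClosed_univ univ_nonempty fun _ ↦ mapsTo_univ _ _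
  refine ⟨M, hne, fun y hy ↦ ?_⟩
  have hsub : closure (AddAction.orbit G y) ⊆ M :=
    closure_minimal (range_subset_iff.2 fun a ↦ hinv a hy) hM
  exact hsub.antisymm <| hmin ⟨isClosed_closure, (AddAction.nonempty_orbit y).closure, fun a ↦
    mapsTo_iff_image_subset.2 (vadd_closure_orbit_subset a y)⟩ hsub

end MinimalSets

section DiagonalHull

variable {ι κ G X : Type*} [AddGroup G] [TopologicalSpace X] [AddAction G X]

variable (X) in
/-- The closure of the `Λ`-orbit of the diagonal of `X^ι`, where `l ∈ Λ` moves the `i`-th coordinate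
by `l i`. For an action of `ℤ` and `Λ` the group of arithmetic progressions of length `d`, this is
`N_d`. -/
def diagonalHull (Λ : AddSubgroup (ι → G)) : Set (ι → X) :=
  closure {f | ∃ x : X, ∃ l ∈ Λ, f = fun i ↦ l i +ᵥ x}

theorem vadd_mem_diagonalHull {Λ : AddSubgroup (ι → G)} {l : ι → G} (hl : l ∈ Λ) (x : X) :
    (fun i ↦ l i +ᵥ x) ∈ diagonalHull X Λ :=
  subset_closure ⟨x, l, hl, rfl⟩

theorem isClosed_diagonalHull (Λ : AddSubgroup (ι → G)) : IsClosed (diagonalHull X Λ) :=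
  isClosed_closure

theorem const_mem_diagonalHull (Λ : AddSubgroup (ι → G)) (x : X) :
    (fun _ ↦ x) ∈ diagonalHull X Λ := by
  simpa only [Pi.zero_apply, zero_vadd] using vadd_mem_diagonalHull Λ.zero_mem x

theorem exists_vadd_mem_of_isOpen {Λ : AddSubgroup (ι → G)} {f : ι → X}
    (hf : f ∈ diagonalHull X Λ) {O : Set (ι → X)} (hO : IsOpen O) (hfO : f ∈ O) :
    ∃ x : X, ∃ l ∈ Λ, (fun i ↦ l i +ᵥ x) ∈ O := by
  obtain ⟨_, hmem, x, l, hl, rfl⟩ := mem_closure_iff.1 hf O hO hfO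
  exact ⟨x, l, hl, hmem⟩

theorem diagonalHull_subset {Λ : AddSubgroup (ι → G)} {C : Set (ι → X)} (hC : IsClosed C)
    (hmem : ∀ x, ∀ l ∈ Λ, (fun i ↦ l i +ᵥ x) ∈ C) : diagonalHull X Λ ⊆ C :=
  closure_minimal (by rintro _ ⟨x, l, hl, rfl⟩; exact hmem x l hl) hC

theorem comp_mem_diagonalHull {Λ : AddSubgroup (ι → G)} {Λ' : AddSubgroup (κ → G)} (φ : κ → ι)
    (hφ : ∀ l ∈ Λ, l ∘ φ ∈ Λ') {f : ι → X} (hf : f ∈ diagonalHull X Λ) :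
    f ∘ φ ∈ diagonalHull X Λ' :=
  diagonalHull_subset ((isClosed_diagonalHull Λ').preimage (Pi.continuous_precomp φ))
    (fun x _ hl ↦ vadd_mem_diagonalHull (hφ _ hl) x) hf

variable [ContinuousConstVAdd G X]

theorem map_vadd_mem_diagonalHull {Λ : AddSubgroup (ι → G)} {l : ι → G} (hl : l ∈ Λ) {f : ι → X}
    (hf : f ∈ diagonalHull X Λ) : (fun i ↦ l i +ᵥ f i) ∈ diagonalHull X Λ := by
  have hcont : Continuous fun (f : ι → X) i ↦ l i +ᵥ f i := by fun_prop
  refine diagonalHull_subset ((isClosed_diagonalHull Λ).preimage hcont) (fun x m hm ↦ ?_) hf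
  simpa only [mem_preimage, vadd_vadd, Pi.add_apply] using vadd_mem_diagonalHull (Λ.add_mem hl hm) x

instance continuousConstVAdd_addSubgroup (H : AddSubgroup G) : ContinuousConstVAdd H X :=
  ⟨fun a ↦ continuous_const_vadd (a : G)⟩

instance continuousConstVAdd_pi : ContinuousConstVAdd (ι → G) (ι → X) :=
  ⟨fun l ↦ continuous_pi fun i ↦ (continuous_apply i).const_vadd (l i)⟩

theorem closure_orbit_const_eq_diagonalHull [AddAction.IsMinimal G X] {Λ : AddSubgroup (ι → G)}
    (hconst : ∀ a : G, (fun _ ↦ a) ∈ Λ) (x : X) :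
    closure (AddAction.orbit Λ fun _ : ι ↦ x) = diagonalHull X Λ := by
  refine (closure_mono ?_).antisymm (diagonalHull_subset isClosed_closure fun y l hl ↦ ?_)
  · rintro _ ⟨l, rfl⟩
    exact ⟨x, l, l.2, rfl⟩
  · have hdiag : (fun _ ↦ y) ∈ closure (AddAction.orbit Λ fun _ : ι ↦ x) := by
      refine map_mem_closure (by fun_prop : Continuous fun (z : X) (_ : ι) ↦ z)
        (AddAction.dense_orbit G x y) ?_
      rintro _ ⟨a, rfl⟩
      exact ⟨⟨_, hconst a⟩, rfl⟩
    exact vadd_closure_orbit_subset (⟨l, hl⟩ : Λ) _ ⟨_, hdiag, rfl⟩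

end DiagonalHull

section EllisSemigroup

variable {ι G X : Type*} [AddGroup G] [TopologicalSpace X] [AddAction G X]

instance endTopologicalSpace : TopologicalSpace (Function.End X) :=
  inferInstanceAs (TopologicalSpace (X → X))

instance endCompactSpace [CompactSpace X] : CompactSpace (Function.End X) :=
  inferInstanceAs (CompactSpace (X → X))

instance endT2Space [T2Space X] : T2Space (Function.End X) :=
  inferInstanceAs (T2Space (X → X))

theorem continuous_end_mul_const (r : Function.End X) : Continuous (· * r) :=
  Pi.continuous_precomp r

/-- Translation by `a` as an element of the semigroup of self-maps of `X`, in which the Ellis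
semigroup is formed. -/
def translation (X : Type*) [AddAction G X] (a : G) : Function.End X :=
  fun x ↦ a +ᵥ x

theorem translation_add {X : Type*} [AddAction G X] (a b : G) :
    translation X (a + b) = translation X a * translation X b :=
  funext fun x ↦ add_vadd a b x

theorem continuous_translation_mul [ContinuousConstVAdd G X] (a : G) :
    Continuous (translation X a * ·) :=
  continuous_pi fun x ↦ (continuous_apply x).const_vadd a

variable (G X) in
/-- The Ellis semigroup of the action of `G` on `X`, for the topology of pointwise convergence. -/
def ellisSemigroup : Set (Function.End X) :=
  closure (range (translation X : G → Function.End X))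

variable (X) in
/-- The Ellis semigroup of the coordinatewise action of `Λ` on `X^ι`. All its elements act
coordinatewise, so they are recorded as families of self-maps of `X`. -/
def piEllisSemigroup (Λ : AddSubgroup (ι → G)) : Set (ι → Function.End X) :=
  closure (range fun (l : Λ) i ↦ translation X (l.1 i))

theorem apply_mem_ellisSemigroup {Λ : AddSubgroup (ι → G)} {p : ι → Function.End X}
    (hp : p ∈ piEllisSemigroup X Λ) (i : ι) : p i ∈ ellisSemigroup G X := by
  refine map_mem_closure (f := fun p : ι → Function.End X ↦ p i) (by fun_prop) hp ?_
  rintro _ ⟨l, rfl⟩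
  exact ⟨l.1 i, rfl⟩

theorem const_mem_piEllisSemigroup {Λ : AddSubgroup (ι → G)} (hconst : ∀ a : G, (fun _ ↦ a) ∈ Λ)
    {e : Function.End X} (he : e ∈ ellisSemigroup G X) : (fun _ ↦ e) ∈ piEllisSemigroup X Λ := by
  refine map_mem_closure (f := fun (e : Function.End X) (_ : ι) ↦ e) (by fun_prop) he ?_
  rintro _ ⟨a, rfl⟩
  exact ⟨⟨_, hconst a⟩, rfl⟩

theorem image_piEllisSemigroup_eq_closure_orbit [CompactSpace X] [T2Space X]
    (Λ : AddSubgroup (ι → G)) (f : ι → X) :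
    (fun (p : ι → Function.End X) i ↦ p i (f i)) '' piEllisSemigroup X Λ =
      closure (AddAction.orbit Λ f) := by
  have hcont : Continuous fun (p : ι → Function.End X) i ↦ p i (f i) :=
    continuous_pi fun i ↦ (continuous_apply (f i)).comp (continuous_apply i)
  rw [piEllisSemigroup, image_closure_of_isCompact isClosed_closure.isCompact hcont.continuousOn,
    ← range_comp]
  rfl

variable [ContinuousConstVAdd G X]

theorem mul_mem_ellisSemigroup :
    ∀ p ∈ ellisSemigroup G X, ∀ q ∈ ellisSemigroup G X, p * q ∈ ellisSemigroup G X :=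
  mul_mem_closure_range_of_map_add continuous_end_mul_const translation_add
    continuous_translation_mul

theorem mul_mem_piEllisSemigroup (Λ : AddSubgroup (ι → G)) :
    ∀ p ∈ piEllisSemigroup X Λ, ∀ q ∈ piEllisSemigroup X Λ, p * q ∈ piEllisSemigroup X Λ :=
  mul_mem_closure_range_of_map_add
    (fun r ↦ continuous_pi fun i ↦ (continuous_end_mul_const (r i)).comp (continuous_apply i))
    (fun l m ↦ funext fun i ↦ translation_add (l.1 i) (m.1 i))
    fun l ↦ continuous_pi fun i ↦ (continuous_translation_mul (l.1 i)).comp (continuous_apply i)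

variable [CompactSpace X] [T2Space X]

/-- This is due to Glasner. A minimal idempotent `v` of the Ellis semigroup of `X` gives the
idempotent `(v, …, v)` on `X^ι`, and the latter is again minimal because minimality can be tested
coordinatewise. -/
theorem isMinimalSet_diagonalHull [Nonempty X] [AddAction.IsMinimal G X] {Λ : AddSubgroup (ι → G)}
    (hconst : ∀ a : G, (fun _ ↦ a) ∈ Λ) : IsMinimalSet Λ (diagonalHull X Λ) := by
  obtain ⟨x₀⟩ := ‹Nonempty X›
  obtain ⟨v, hvE, hv, hvmin⟩ := exists_minimal_idempotent continuous_end_mul_const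
    isClosed_closure (range_nonempty (translation X : G → _)).closure mul_mem_ellisSemigroup
  have hvx : v (v x₀) = v x₀ := congrFun hv x₀
  rw [← closure_orbit_const_eq_diagonalHull hconst (v x₀)]
  refine ⟨(AddAction.nonempty_orbit _).closure, fun w hw ↦ ?_⟩
  refine (closure_orbit_subset_of_mem hw).antisymm (closure_orbit_subset_of_mem ?_)
  rw [← image_piEllisSemigroup_eq_closure_orbit] at hw ⊢
  obtain ⟨p, hp, rfl⟩ := hw
  obtain ⟨q, hq, hqp⟩ := exists_mul_mul_const_eq_const continuous_end_mul_const hv hvmin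
    isClosed_closure (mul_mem_piEllisSemigroup Λ) (fun p hp ↦ apply_mem_ellisSemigroup hp)
    (const_mem_piEllisSemigroup hconst hvE) hp
  refine ⟨q, hq, funext fun i ↦ ?_⟩
  calc q i (p i (v x₀)) = q i (p i (v (v x₀))) := by rw [hvx]
    _ = v (v x₀) := congrFun (congrFun hqp i) (v x₀)
    _ = v x₀ := hvx

end EllisSemigroup

section SemiOpen

theorem exists_isOpen_inter_subset_of_subset_iUnion {Z ι : Type*} [TopologicalSpace Z] [T2Space Z]
    [Countable ι] {A : Set Z} (hA : IsCompact A) (hne : A.Nonempty) {K : ι → Set Z}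
    (hK : ∀ i, IsClosed (K i)) (hcover : A ⊆ ⋃ i, K i) :
    ∃ i, ∃ W : Set Z, IsOpen W ∧ (W ∩ A).Nonempty ∧ W ∩ A ⊆ K i := by
  have : CompactSpace A := isCompact_iff_compactSpace.1 hA
  have : Nonempty A := hne.to_subtype
  obtain ⟨i, w, hw⟩ := nonempty_interior_of_iUnion_of_closed (f := fun i ↦ ((↑) : A → Z) ⁻¹' K i)
    (fun i ↦ (hK i).preimage continuous_subtype_val)
    (eq_univ_of_forall fun z ↦ by simpa only [mem_iUnion, mem_preimage] using hcover z.2)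
  obtain ⟨U, hUK, hU, hwU⟩ := mem_interior.1 hw
  obtain ⟨W, hW, rfl⟩ := isOpen_induced_iff.1 hU
  exact ⟨i, W, hW, ⟨w, hwU, w.2⟩, fun z hz ↦ hUK (show ⟨z, hz.2⟩ ∈ _ from hz.1)⟩

theorem exists_isOpen_inter_image_subset {G Y Z : Type*} [AddGroup G] [TopologicalSpace Y]
    [CompactSpace Y] [T2Space Y] [AddAction G Y] [ContinuousConstVAdd G Y] [TopologicalSpace Z]
    [T2Space Z] {M : Set Y} (hM : IsClosed M) (hne : M.Nonempty)
    (hinv : ∀ (a : G), ∀ y ∈ M, a +ᵥ y ∈ M) {π : Y → Z} (hπ : Continuous π) {φ : G → Z → Z}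
    (hφ : ∀ a, Continuous (φ a)) (hequiv : ∀ a y, π (a +ᵥ y) = φ a (π y)) {O : Set Y}
    (hO : IsOpen O) (hmeet : ∀ y ∈ M, ∃ a : G, a +ᵥ y ∈ O) :
    ∃ V : Set Z, IsOpen V ∧ (V ∩ π '' M).Nonempty ∧ V ∩ π '' M ⊆ π '' (M ∩ O) := by
  have hnhds : ∀ y ∈ M, ∃ a : G, ∃ K ∈ 𝓝 y, IsClosed K ∧ ∀ z ∈ K, a +ᵥ z ∈ O := fun y hy ↦ by
    obtain ⟨a, ha⟩ := hmeet y hy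
    obtain ⟨K, hK, hKc, hKO⟩ := exists_mem_nhds_isClosed_subset
      ((hO.preimage (continuous_const_vadd a)).mem_nhds ha)
    exact ⟨a, K, hK, hKc, hKO⟩
  choose! a K hKnhds hKc hKO using hnhds
  obtain ⟨t, htM, hcover⟩ := hM.isCompact.elim_nhds_subcover K hKnhds
  obtain ⟨⟨y, hy⟩, W, hW, ⟨_, hmW, m, hm, rfl⟩, hWK⟩ := exists_isOpen_inter_subset_of_subset_iUnion
    (K := fun y : t ↦ π '' (M ∩ K y)) (hM.isCompact.image hπ) (hne.image π)
    (fun y ↦ ((hM.inter (hKc y (htM y y.2))).isCompact.image hπ).isClosed) (by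
      rintro _ ⟨z, hz, rfl⟩
      obtain ⟨y, hyt, hzy⟩ := mem_iUnion₂.1 (hcover hz)
      exact mem_iUnion.2 ⟨⟨y, hyt⟩, z, ⟨hz, hzy⟩, rfl⟩)
  have hcancel : ∀ m, φ (-a y) (φ (a y) (π m)) = π m := fun m ↦ by
    rw [← hequiv, ← hequiv, neg_vadd_vadd]
  refine ⟨φ (-a y) ⁻¹' W, hW.preimage (hφ _),
    ⟨φ (a y) (π m), by rwa [mem_preimage, hcancel], a y +ᵥ m, hinv _ m hm, hequiv _ _⟩, ?_⟩
  rintro _ ⟨hnW, n, hn, rfl⟩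
  rw [mem_preimage, ← hequiv] at hnW
  obtain ⟨k, ⟨hkM, hkK⟩, hk⟩ := hWK ⟨hnW, _, hinv _ n hn, rfl⟩
  refine ⟨a y +ᵥ k, ⟨hinv _ k hkM, hKO y (htM y hy) k hkK⟩, ?_⟩
  rw [hequiv, hk, ← hequiv, vadd_neg_vadd]

end SemiOpen

section Realizability

variable {ι G X : Type*} [AddGroup G] [TopologicalSpace X] [AddAction G X]

/-- Realizability of a pattern: some point of the diagonal hull of `Λ` has its coordinates with
index `i ∈ s` in the prescribed sets `A i`; the other coordinates are free. -/
def IsRealizable (Λ : AddSubgroup (ι → G)) (s : Set ι) (A : ι → Set X) : Prop :=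
  ∃ f ∈ diagonalHull X Λ, ∀ i ∈ s, f i ∈ A i

theorem IsRealizable.exists_vadd_mem {Λ : AddSubgroup (ι → G)} {s : Set ι} (hs : s.Finite)
    {A : ι → Set X} (hA : ∀ i ∈ s, IsOpen (A i)) (h : IsRealizable Λ s A) :
    ∃ x : X, ∃ l ∈ Λ, ∀ i ∈ s, l i +ᵥ x ∈ A i := by
  obtain ⟨f, hf, hfA⟩ := h
  exact exists_vadd_mem_of_isOpen hf (isOpen_set_pi hs hA) hfA

theorem exists_isRealizable_forall_exists_eqOn [CompactSpace X] [T2Space X]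
    [ContinuousConstVAdd G X] {Λ : AddSubgroup (ι → G)} (hmin : IsMinimalSet Λ (diagonalHull X Λ))
    {s s' : Set ι} (hs : s.Finite) (hs's : s' ⊆ s) {A : ι → Set X} (hA : ∀ i, IsOpen (A i))
    (hreal : IsRealizable Λ s A) :
    ∃ B : ι → Set X, (∀ i, IsOpen (B i)) ∧ (∀ i, B i ⊆ A i) ∧ IsRealizable Λ s' B ∧
      ∀ f ∈ diagonalHull X Λ, (∀ i ∈ s', f i ∈ B i) →
        ∃ h ∈ diagonalHull X Λ, EqOn h f s' ∧ ∀ i ∈ s, h i ∈ A i := by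
  obtain ⟨f₀, hf₀, hf₀A⟩ := hreal
  have hO : IsOpen {f : ι → X | ∀ i ∈ s, f i ∈ A i} := isOpen_set_pi hs fun i _ ↦ hA i
  obtain ⟨V, hV, ⟨_, hgV, g, hg, rfl⟩, hVsub⟩ := exists_isOpen_inter_image_subset
    (π := fun (f : ι → X) (i : s') ↦ f i) (φ := fun (l : Λ) v i ↦ l.1 i +ᵥ v i) hmin.isClosed
    hmin.1 (fun l y hy ↦ hmin.vadd_mem l hy) (by fun_prop) (fun l ↦ by fun_prop) (fun _ _ ↦ rfl) hO
    (fun y hy ↦ by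
      obtain ⟨_, hmem, l, rfl⟩ := mem_closure_iff.1 (hmin.2 y hy ▸ hf₀) _ hO hf₀A
      exact ⟨l, hmem⟩)
  have : Finite s' := hs.subset hs's
  obtain ⟨u, hu, huV⟩ := isOpen_pi_iff'.1 hV _ hgV
  obtain ⟨h, ⟨hhQ, hhA⟩, hhg⟩ := hVsub ⟨hgV, g, hg, rfl⟩
  refine ⟨fun i ↦ A i ∩ ⋂ hi : i ∈ s', u ⟨i, hi⟩, fun i ↦ (hA i).inter ?_,
    fun i ↦ inter_subset_left, ⟨h, hhQ, fun i hi ↦ ⟨hhA i (hs's hi), mem_iInter.2 fun _ ↦ ?_⟩⟩,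
    fun f hf hfB ↦ ?_⟩
  · exact isOpen_iInter_of_finite fun hi ↦ (hu ⟨i, hi⟩).1
  · have hhgi : h i = g i := congrFun hhg ⟨i, hi⟩
    exact hhgi ▸ (hu ⟨i, hi⟩).2
  · obtain ⟨k, ⟨hkQ, hkA⟩, hkf⟩ := hVsub ⟨huV fun i _ ↦ mem_iInter.1 (hfB i i.2).2 i.2, f, hf, rfl⟩
    exact ⟨k, hkQ, fun i hi ↦ congrFun hkf ⟨i, hi⟩, hkA⟩

end Realizability

section TwistedProgressions

/-- The value at time `t` and vertex `ε` of a cube, for `p = (t, ε)`, of the arithmetic progression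
`a + b * t` twisted in each direction `j ∈ ε` by the progression `m j * (t - j)`, which vanishes at
`t = j`. -/
def twistedExponent (a b : ℤ) (m : ℕ → ℤ) (p : ℕ × Finset ℕ) : ℤ :=
  a + b * p.1 + ∑ j ∈ p.2, m j * (p.1 - j)

theorem twistedExponent_add (a a' b b' : ℤ) (m m' : ℕ → ℤ) :
    twistedExponent (a + a') (b + b') (m + m') =
      twistedExponent a b m + twistedExponent a' b' m' := by
  ext p
  simp only [twistedExponent, Pi.add_apply, add_mul, Finset.sum_add_distrib]
  ring

theorem twistedExponent_neg (a b : ℤ) (m : ℕ → ℤ) :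
    twistedExponent (-a) (-b) (-m) = -twistedExponent a b m := by
  ext p
  simp only [twistedExponent, Pi.neg_apply, neg_mul, Finset.sum_neg_distrib]
  ring

/-- The group of twisted arithmetic progressions, indexed by pairs of a time and a vertex of a
cube. The cube is infinite-dimensional; the relevant finite parts are the sets `twistedStage`. -/
def twistedProgressions : AddSubgroup (ℕ × Finset ℕ → ℤ) where
  carrier := {l | ∃ a b m, l = twistedExponent a b m}
  zero_mem' := ⟨0, 0, 0, by ext; simp [twistedExponent]⟩
  add_mem' := by
    rintro _ _ ⟨a, b, m, rfl⟩ ⟨a', b', m', rfl⟩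
    exact ⟨_, _, _, (twistedExponent_add a a' b b' m m').symm⟩
  neg_mem' := by
    rintro _ ⟨a, b, m, rfl⟩
    exact ⟨_, _, _, (twistedExponent_neg a b m).symm⟩

theorem twistedExponent_mem (a b : ℤ) (m : ℕ → ℤ) :
    twistedExponent a b m ∈ twistedProgressions :=
  ⟨a, b, m, rfl⟩

theorem const_mem_twistedProgressions (a : ℤ) : (fun _ ↦ a) ∈ twistedProgressions :=
  ⟨a, 0, 0, funext fun p ↦ by simp [twistedExponent]⟩

theorem twistedExponent_insert (a b : ℤ) (m : ℕ → ℤ) (t : ℕ) {r : ℕ} {ε : Finset ℕ} (hr : r ∉ ε) :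
    twistedExponent a b m (t, insert r ε) = m r * (t - r) + twistedExponent a b m (t, ε) := by
  simp only [twistedExponent, Finset.sum_insert hr]
  ring

theorem twistedExponent_erase (a b : ℤ) (m : ℕ → ℤ) (t r : ℕ) (ε : Finset ℕ) :
    twistedExponent a b m (t, ε.erase r) = twistedExponent a b (Function.update m r 0) (t, ε) := by
  have hvanish : Function.update m r 0 r * (t - r) = 0 := by rw [Function.update_self, zero_mul]
  rw [twistedExponent, twistedExponent, ← Finset.sum_erase ε hvanish]
  exact congrArg _ <| Finset.sum_congr rfl fun j hj ↦ by
    rw [Function.update_of_ne (Finset.ne_of_mem_erase hj)]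

theorem twistedExponent_untwist (c : ℤ) (r : ℕ) (p : ℕ × Finset ℕ) :
    twistedExponent (c * r) (-c) 0 p = -(c * (p.1 - r)) := by
  simp only [twistedExponent, Pi.zero_apply, zero_mul, Finset.sum_const_zero]
  ring

theorem comp_erase_mem_twistedProgressions (r : ℕ) {l : ℕ × Finset ℕ → ℤ}
    (hl : l ∈ twistedProgressions) :
    l ∘ Prod.map id (Finset.erase · r) ∈ twistedProgressions := by
  obtain ⟨a, b, m, rfl⟩ := hl
  exact ⟨a, b, Function.update m r 0, funext fun p ↦ twistedExponent_erase a b m p.1 r p.2⟩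

theorem comp_insert_mem_twistedProgressions (r : ℕ) {l : ℕ × Finset ℕ → ℤ}
    (hl : l ∈ twistedProgressions) :
    l ∘ Prod.map id (insert r) ∈ twistedProgressions := by
  obtain ⟨a, b, m, rfl⟩ := hl
  refine ⟨a - m r * r, b + m r, Function.update m r 0, funext fun p ↦ ?_⟩
  have hinsert : insert r p.2 = insert r (p.2.erase r) := by grind
  calc twistedExponent a b m (p.1, insert r p.2)
    _ = m r * (p.1 - r) + twistedExponent a b m (p.1, p.2.erase r) := by
      rw [hinsert, twistedExponent_insert _ _ _ _ (Finset.notMem_erase r p.2)]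
    _ = twistedExponent (a - m r * r) (b + m r) (Function.update m r 0) p := by
      rw [twistedExponent_erase]
      simp only [twistedExponent]
      ring

/-- The indices of the `r`-th stage of the hiding process: the times `1, …, r` are hidden, in
exchange for a doubling of the remaining times `0, r + 1, …, D + 1` in each of the directions `1,
…, r`. -/
def twistedStage (D r : ℕ) : Set (ℕ × Finset ℕ) :=
  {p | p.1 ≤ D + 1 ∧ (p.1 = 0 ∨ r < p.1) ∧ p.2 ⊆ Finset.Icc 1 r}

theorem finite_twistedStage (D r : ℕ) : (twistedStage D r).Finite :=
  ((finite_Iic (D + 1)).prod (Finset.finite_toSet (Finset.Icc 1 r).powerset)).subset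
    fun _ hp ↦ ⟨hp.1, Finset.mem_coe.2 (Finset.mem_powerset.2 hp.2.2)⟩

theorem succ_notMem_of_mem_twistedStage {D r : ℕ} {p : ℕ × Finset ℕ} (hp : p ∈ twistedStage D r) :
    r + 1 ∉ p.2 := fun hmem ↦ by
  have := (Finset.mem_Icc.1 (hp.2.2 hmem)).2
  lia

theorem mem_twistedStage_succ {D r : ℕ} {p : ℕ × Finset ℕ} (hp : p ∈ twistedStage D r)
    (hpr : p.1 ≠ r + 1) : p ∈ twistedStage D (r + 1) :=
  ⟨hp.1, hp.2.1.imp_right fun h ↦ lt_of_le_of_ne h hpr.symm,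
    hp.2.2.trans (Finset.Icc_subset_Icc_right r.le_succ)⟩

theorem insert_mem_twistedStage_succ {D r : ℕ} {p : ℕ × Finset ℕ} (hp : p ∈ twistedStage D r)
    (hpr : p.1 ≠ r + 1) : (p.1, insert (r + 1) p.2) ∈ twistedStage D (r + 1) := by
  obtain ⟨hD, hr, hε⟩ := mem_twistedStage_succ hp hpr
  exact ⟨hD, hr, Finset.insert_subset (Finset.mem_Icc.2 ⟨r.succ_pos, le_rfl⟩) hε⟩

theorem erase_mem_of_mem_twistedStage_succ {D r : ℕ} {p : ℕ × Finset ℕ}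
    (hp : p ∈ twistedStage D (r + 1)) :
    (p.1, p.2.erase (r + 1)) ∈ {p ∈ twistedStage D r | p.1 ≠ r + 1} := by
  obtain ⟨hD, hr, hε⟩ := hp
  refine ⟨⟨hD, hr.imp_right (r.lt_succ_self.trans ·), fun j hj ↦ ?_⟩, by lia⟩
  obtain ⟨hjr, hj⟩ := Finset.mem_erase.1 hj
  have := Finset.mem_Icc.1 (hε hj)
  exact Finset.mem_Icc.2 (by lia)

end TwistedProgressions

section TwistedReturns

variable {X : Type*} [TopologicalSpace X] [AddAction ℤ X]

/-- The returns of `u` to `U` that allow `u` to be placed at the index `(0, ∅)` of the last stage.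
They are the values at `(D + 1, ε)`, and at `(0, ε)` for `ε` of cardinality `i`, of the twisted
progression `D! * b * t - ∑ j ∈ ε, ((D + 1)! / j) * ν * (t - j)`; the divisions are exact. -/
def HasTwistedReturns (D : ℕ) (U : Set X) (u : X) : Prop :=
  ∃ b ν : ℤ,
    (∀ ε ⊆ Finset.Icc 1 D, ((D + 1).factorial * b -
      (∑ j ∈ ε, ((D + 1).factorial / j : ℕ) * (D + 1 - j : ℤ)) * ν) +ᵥ u ∈ U) ∧
    ∀ i ∈ Finset.Icc 1 D, (i * (D + 1).factorial * ν : ℤ) +ᵥ u ∈ U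

theorem twistedExponent_correction_zero {D : ℕ} (b ν : ℤ) {ε : Finset ℕ} (hε : ε ⊆ Finset.Icc 1 D) :
    twistedExponent 0 (D.factorial * b) (fun j ↦ -(((D + 1).factorial / j : ℕ) * ν)) (0, ε) =
      ε.card * (D + 1).factorial * ν := by
  have hterm : ∀ j ∈ ε, -((((D + 1).factorial / j : ℕ) : ℤ) * ν) * (((0 : ℕ) : ℤ) - j) =
      (D + 1).factorial * ν := fun j hj ↦ by
    obtain ⟨hj₁, hjD⟩ := Finset.mem_Icc.1 (hε hj)
    have hdvd : (D + 1).factorial / j * j = (D + 1).factorial :=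
      Nat.div_mul_cancel (Nat.dvd_factorial hj₁ (by lia))
    rw [← hdvd, Nat.mul_div_cancel _ hj₁]
    push_cast
    ring
  rw [twistedExponent, Finset.sum_congr rfl hterm, Finset.sum_const, nsmul_eq_mul]
  push_cast
  ring

theorem twistedExponent_correction_last (D : ℕ) (b ν : ℤ) (ε : Finset ℕ) :
    twistedExponent 0 (D.factorial * b) (fun j ↦ -(((D + 1).factorial / j : ℕ) * ν)) (D + 1, ε) =
      (D + 1).factorial * b - (∑ j ∈ ε, ((D + 1).factorial / j : ℕ) * (D + 1 - j : ℤ)) * ν := by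
  rw [twistedExponent, Finset.sum_mul, Nat.factorial_succ, sub_eq_add_neg, ← Finset.sum_neg_distrib]
  push_cast
  refine congrArg₂ _ (by ring) (Finset.sum_congr rfl fun j _ ↦ by ring)

variable [ContinuousConstVAdd ℤ X]

open Function in
theorem exists_isOpen_forall_isRealizable_update_twistedStage_self {D : ℕ}
    {A : ℕ × Finset ℕ → Set X} (hA : ∀ p, IsOpen (A p))
    (hreal : IsRealizable twistedProgressions (twistedStage D D) A) :
    ∃ U : Set X, IsOpen U ∧ U.Nonempty ∧ U ⊆ A (0, ∅) ∧ ∀ (u : X) (O : Set X), u ∈ O →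
      HasTwistedReturns D U u →
      IsRealizable twistedProgressions (twistedStage D D) (update A (0, ∅) O) := by
  obtain ⟨x, _, ⟨a, b₀, m, rfl⟩, hx⟩ :=
    hreal.exists_vadd_mem (finite_twistedStage D D) fun p _ ↦ hA p
  refine ⟨⋂ p ∈ twistedStage D D, (twistedExponent 0 b₀ m p +ᵥ ·) ⁻¹' A p,
    (finite_twistedStage D D).isOpen_biInter fun p _ ↦ (hA p).preimage (continuous_const_vadd _),
    ⟨a +ᵥ x, mem_iInter₂.2 fun p hp ↦ ?_⟩, fun y hy ↦ ?_, fun u O hu ⟨b, ν, hlast, hzero⟩ ↦ ?_⟩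
  · have hsplit : twistedExponent 0 b₀ m p + a = twistedExponent a b₀ m p := by
      simp only [twistedExponent]
      ring
    rw [mem_preimage, vadd_vadd, hsplit]
    exact hx p hp
  · simpa [twistedExponent] using mem_iInter₂.1 hy (0, ∅) (by simp [twistedStage])
  · refine ⟨_, vadd_mem_diagonalHull (twistedProgressions.add_mem (twistedExponent_mem 0 b₀ m)
      (twistedExponent_mem 0 (D.factorial * b) fun j ↦ -(((D + 1).factorial / j : ℕ) * ν))) u, ?_⟩
    rintro ⟨t, ε⟩ hp
    obtain ⟨htD, ht, hε⟩ := id hp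
    obtain hp₀ | hp₀ := eq_or_ne (t, ε) (0, ∅)
    · rw [hp₀, update_self]
      simpa [twistedExponent] using hu
    rw [update_of_ne hp₀, Pi.add_apply, add_vadd]
    obtain rfl | rfl : t = 0 ∨ t = D + 1 := by grind
    · have hε₀ : 0 < ε.card :=
        Finset.card_pos.2 (Finset.nonempty_iff_ne_empty.2 fun h ↦ hp₀ (by rw [h]))
      have hεD : ε.card ≤ D := by simpa using Finset.card_le_card hε
      rw [twistedExponent_correction_zero b ν hε]
      exact mem_iInter₂.1 (hzero ε.card (Finset.mem_Icc.2 ⟨hε₀, hεD⟩)) _ hp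
    · rw [twistedExponent_correction_last]
      exact mem_iInter₂.1 (hlast ε hε) _ hp

open Function in
/-- The coordinates at time `r + 1` are found by lifting the upper face in direction `r + 1`. The
twist in that direction vanishes there, so that undoing it keeps these coordinates, while it turns
the upper face into the lower one at all other times. -/
theorem IsRealizable.update_of_succ {D r : ℕ} {A B : ℕ × Finset ℕ → Set X} {O : Set X}
    (hB : ∀ p, IsOpen (B p)) (hBA : ∀ p, B p ⊆ A p) (hO : IsOpen O)
    (hlift : ∀ f ∈ diagonalHull X twistedProgressions,
      (∀ p ∈ {p ∈ twistedStage D r | p.1 ≠ r + 1}, f p ∈ B p) →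
        ∃ h ∈ diagonalHull X twistedProgressions, EqOn h f {p ∈ twistedStage D r | p.1 ≠ r + 1} ∧
          ∀ p ∈ twistedStage D r, h p ∈ A p)
    (hreal : IsRealizable twistedProgressions (twistedStage D (r + 1))
      (update (fun p ↦ B (p.1, p.2.erase (r + 1))) (0, ∅) O)) :
    IsRealizable twistedProgressions (twistedStage D r) (update A (0, ∅) O) := by
  obtain ⟨x, _, ⟨a, b, m, rfl⟩, hx⟩ :=
      hreal.exists_vadd_mem (finite_twistedStage D (r + 1)) fun p _ ↦ by
    obtain rfl | hp := eq_or_ne p (0, ∅)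
    · rwa [update_self]
    · rw [update_of_ne hp]
      exact hB _
  obtain ⟨h, hh, hheq, hhA⟩ := hlift _ (vadd_mem_diagonalHull
      (comp_insert_mem_twistedProgressions (r + 1) (twistedExponent_mem a b m)) x) fun p hp ↦ by
    have hne : (p.1, insert (r + 1) p.2) ≠ (0, ∅) := by simp
    have := hx _ (insert_mem_twistedStage_succ hp.1 hp.2)
    rwa [update_of_ne hne, Finset.erase_insert (succ_notMem_of_mem_twistedStage hp.1)] at this
  refine ⟨_, map_vadd_mem_diagonalHull
    (twistedExponent_mem (m (r + 1) * (r + 1 : ℕ)) (-m (r + 1)) 0) hh, fun p hp ↦ ?_⟩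
  rw [twistedExponent_untwist]
  by_cases hpr : p.1 = r + 1
  · rw [hpr, sub_self, mul_zero, neg_zero, zero_vadd, update_of_ne (by rintro rfl; simp at hpr)]
    exact hhA p hp
  · rw [hheq ⟨hp, hpr⟩]
    simp only [comp_apply, Prod.map, id]
    rw [twistedExponent_insert a b m p.1 (succ_notMem_of_mem_twistedStage hp), add_vadd,
      neg_vadd_vadd]
    have hxp := hx p (mem_twistedStage_succ hp hpr)
    obtain rfl | hp₀ := eq_or_ne p (0, ∅)
    · rwa [update_self] at hxp ⊢
    · rw [update_of_ne hp₀, Finset.erase_eq_of_notMem (succ_notMem_of_mem_twistedStage hp)] at hxp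
      rw [update_of_ne hp₀]
      exact hBA p hxp

variable [CompactSpace X] [T2Space X] [AddAction.IsMinimal ℤ X]

open Function in
theorem exists_isOpen_forall_isRealizable_update_twistedStage {D r : ℕ} (hr : r ≤ D)
    {A : ℕ × Finset ℕ → Set X} (hA : ∀ p, IsOpen (A p))
    (hreal : IsRealizable twistedProgressions (twistedStage D r) A) :
    ∃ U : Set X, IsOpen U ∧ U.Nonempty ∧ U ⊆ A (0, ∅) ∧ ∀ (u : X) (O : Set X), IsOpen O → u ∈ O →
      HasTwistedReturns D U u →
      IsRealizable twistedProgressions (twistedStage D r) (update A (0, ∅) O) := by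
  induction hr using Nat.decreasingInduction generalizing A with
  | self =>
    obtain ⟨U, hU, hne, hsub, h⟩ :=
      exists_isOpen_forall_isRealizable_update_twistedStage_self hA hreal
    exact ⟨U, hU, hne, hsub, fun u O _ ↦ h u O⟩
  | of_succ r _ ih =>
    have : Nonempty X := ⟨hreal.choose (0, ∅)⟩
    obtain ⟨B, hB, hBA, ⟨f, hf, hfB⟩, hlift⟩ := exists_isRealizable_forall_exists_eqOn
      (isMinimalSet_diagonalHull const_mem_twistedProgressions) (finite_twistedStage D r)
      (sep_subset (twistedStage D r) fun p ↦ p.1 ≠ r + 1) hA hreal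
    obtain ⟨U, hU, hne, hsub, hret⟩ := ih (A := fun p ↦ B (p.1, p.2.erase (r + 1)))
      (fun p ↦ hB _) ⟨_, comp_mem_diagonalHull _
        (fun l ↦ comp_erase_mem_twistedProgressions (r + 1)) hf,
        fun p hp ↦ hfB _ (erase_mem_of_mem_twistedStage_succ hp)⟩
    exact ⟨U, hU, hne, hsub.trans (hBA _), fun u O hO hu hU ↦
      (hret u O hO hu hU).update_of_succ hB hBA hO hlift⟩

end TwistedReturns

section Progressions

variable {ι : Type*}

/-- The group of exponent vectors `i ↦ a + b * c i`. On `Fin d` with `c i = i` these are the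
arithmetic progressions of length `d`, and for `c = id` those indexed by `ℤ`. -/
def progressions (c : ι → ℤ) : AddSubgroup (ι → ℤ) where
  carrier := {l | ∃ a b, l = fun i ↦ a + b * c i}
  zero_mem' := ⟨0, 0, by ext; simp⟩
  add_mem' := by
    rintro _ _ ⟨a, b, rfl⟩ ⟨a', b', rfl⟩
    exact ⟨a + a', b + b', by ext; simp only [Pi.add_apply]; ring⟩
  neg_mem' := by
    rintro _ ⟨a, b, rfl⟩
    exact ⟨-a, -b, by ext; simp only [Pi.neg_apply]; ring⟩

theorem const_mem_progressions (c : ι → ℤ) (a : ℤ) : (fun _ ↦ a) ∈ progressions c :=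
  ⟨a, 0, by simp⟩

theorem progressions_mul_const_le (c : ι → ℤ) (K : ℤ) :
    progressions (fun i ↦ c i * K) ≤ progressions c := by
  rintro _ ⟨a, b, rfl⟩
  exact ⟨a, b * K, by ext; ring⟩

/-- The group of pairs of parallel arithmetic progressions indexed by `ℤ`, the left one of which is
shifted against the right one by a multiple of `L`. -/
def shiftedProgressions (L : ℤ) : AddSubgroup (ℤ ⊕ ℤ → ℤ) where
  carrier := {l | ∃ a b s, l = Sum.elim (fun k ↦ a + b * k + L * s) fun k ↦ a + b * k}
  zero_mem' := ⟨0, 0, 0, by ext (k | k) <;> simp⟩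
  add_mem' := by
    rintro _ _ ⟨a, b, s, rfl⟩ ⟨a', b', s', rfl⟩
    refine ⟨a + a', b + b', s + s', ?_⟩
    ext (k | k) <;> simp only [Pi.add_apply, Sum.elim_inl, Sum.elim_inr] <;> ring
  neg_mem' := by
    rintro _ ⟨a, b, s, rfl⟩
    refine ⟨-a, -b, -s, ?_⟩
    ext (k | k) <;> simp only [Pi.neg_apply, Sum.elim_inl, Sum.elim_inr] <;> ring

theorem comp_inl_mem_progressions {L : ℤ} {l : ℤ ⊕ ℤ → ℤ} (hl : l ∈ shiftedProgressions L)
    (c : ι → ℤ) : l ∘ (fun i ↦ Sum.inl (c i)) ∈ progressions c := by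
  obtain ⟨a, b, s, rfl⟩ := hl
  exact ⟨a + L * s, b, funext fun i ↦ by simp only [Function.comp_apply, Sum.elim_inl]; ring⟩

theorem elim_self_mem_shiftedProgressions (L : ℤ) {l : ℤ → ℤ} (hl : l ∈ progressions id) :
    Sum.elim l l ∈ shiftedProgressions L := by
  obtain ⟨a, b, rfl⟩ := hl
  exact ⟨a, b, 0, by simp only [mul_zero, add_zero, id]⟩

end Progressions

theorem isClosed_setOf_forall_eq {ι X Y : Type*} [TopologicalSpace X] [TopologicalSpace Y]
    [T2Space X] {f g : ι → Y → X} (hf : ∀ i, Continuous (f i))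
    (hg : ∀ i, Continuous (g i)) : IsClosed {y | ∀ i, f i y = g i y} := by
  simp only [ofPred_forall]
  exact isClosed_iInter fun i ↦ isClosed_eq (hf i) (hg i)

section CoincidenceSet

variable {X : Type*} [TopologicalSpace X] [AddAction ℤ X]

/-- The points `q` of the hull of the pairs of parallel progressions, shifted by multiples of
`(D + 1)!`, whose two copies coincide at the times `i * (D + 1)!` with `1 ≤ i ≤ D` and for which
`(y, g z, g² z, …, g^(D + 1) z)` lies in the hull of the arithmetic progressions, where `y` and `z`
are the left and the right point at time `0`. If the left copy stays in `U`, then `q` yields twisted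
returns to `U` near `z`. -/
def coincidenceSet (g : X → X) (D : ℕ) : Set (ℤ ⊕ ℤ → X) :=
  {q | q ∈ diagonalHull X (shiftedProgressions (D + 1).factorial) ∧
    (∀ i : Fin D,
      q (.inr ((i + 1) * (D + 1).factorial)) = q (.inl ((i + 1) * (D + 1).factorial))) ∧
    Fin.cons (q (.inl 0)) (fun i : Fin (D + 1) ↦ g^[i + 1] (q (.inr 0))) ∈
      diagonalHull X (progressions fun i : Fin (D + 2) ↦ (i : ℤ))}

theorem isClosed_coincidenceSet [T2Space X] {g : X → X} (hg : Continuous g) (D : ℕ) :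
    IsClosed (coincidenceSet g D) := by
  refine (isClosed_diagonalHull _).inter (IsClosed.inter ?_ ?_)
  · exact isClosed_setOf_forall_eq (fun _ ↦ continuous_apply _) fun _ ↦ continuous_apply _
  · refine (isClosed_diagonalHull _).preimage (continuous_pi fun i ↦ ?_)
    cases i using Fin.cases with
    | zero => exact continuous_apply _
    | succ i => exact (hg.iterate _).comp (continuous_apply _)

theorem elim_const_mem_diagonalHull {L : ℤ} {w z : X}
    (hw : w ∈ closure (AddAction.orbit (AddSubgroup.zmultiples L) z)) :
    Sum.elim (fun _ ↦ w) (fun _ ↦ z) ∈ diagonalHull X (shiftedProgressions L) := by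
  refine map_mem_closure (f := fun w ↦ Sum.elim (fun _ ↦ w) fun _ ↦ z)
    (continuous_pi (Sum.rec (fun _ ↦ continuous_id) fun _ ↦ continuous_const)) hw ?_
  rintro _ ⟨⟨_, hn⟩, rfl⟩
  obtain ⟨s, rfl⟩ := AddSubgroup.mem_zmultiples_iff.1 hn
  refine ⟨z, _, ⟨0, 0, s, rfl⟩, ?_⟩
  ext (k | k)
  · simp [mul_comm L, AddSubgroup.vadd_def]
  · simp

variable [ContinuousConstVAdd ℤ X]

theorem map_vadd_mem_coincidenceSet {g : X → X} (hcomm : ∀ (n : ℤ) x, g (n +ᵥ x) = n +ᵥ g x)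
    {D : ℕ} {l : ℤ → ℤ} (hl : l ∈ progressions id) {q : ℤ ⊕ ℤ → X} (hq : q ∈ coincidenceSet g D) :
    (fun i ↦ Sum.elim l l i +ᵥ q i) ∈ coincidenceSet g D := by
  obtain ⟨hhull, heq, hcons⟩ := hq
  refine ⟨map_vadd_mem_diagonalHull (elim_self_mem_shiftedProgressions _ hl) hhull, fun i ↦ ?_, ?_⟩
  · simp only [Sum.elim_inl, Sum.elim_inr, heq i]
  · convert map_vadd_mem_diagonalHull (const_mem_progressions _ (l 0)) hcons using 1
    ext i
    cases i using Fin.cases with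
    | zero => rfl
    | succ i => exact Function.Commute.iterate_left (g := (l 0 +ᵥ ·)) (hcomm (l 0)) _ _

theorem vadd_mem_coincidenceSet {g : X → X} (hcomm : ∀ (n : ℤ) x, g (n +ᵥ x) = n +ᵥ g x) {D : ℕ}
    (n : ℤ) {q : ℤ ⊕ ℤ → X} (hq : q ∈ coincidenceSet g D) : n +ᵥ q ∈ coincidenceSet g D := by
  have h : n +ᵥ q = fun i ↦ Sum.elim (fun _ ↦ n) (fun _ ↦ n) i +ᵥ q i := by ext (k | k) <;> rfl
  rw [h]
  exact map_vadd_mem_coincidenceSet hcomm (const_mem_progressions id n) hq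

variable [CompactSpace X] [T2Space X]

theorem exists_mem_coincidenceSet_inl_eq [AddAction.IsMinimal ℤ X] {g : X → X} (hg : Continuous g)
    (hcomm : ∀ (n : ℤ) x, g (n +ᵥ x) = n +ᵥ g x) {D : ℕ}
    (hne : (coincidenceSet g D).Nonempty) (y : X) :
    ∃ q ∈ coincidenceSet g D, ∀ k, q (.inl k) = y := by
  have : Nonempty X := ⟨y⟩
  obtain ⟨q₀, hq₀⟩ := hne
  have hsub := (isMinimalSet_diagonalHull (X := X) (const_mem_progressions id)).subset_of_isClosed
    (C := (· ∘ Sum.inl) '' coincidenceSet g D)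
    ((isClosed_coincidenceSet hg D).isCompact.image (Pi.continuous_precomp _)).isClosed
    (by
      rintro l _ ⟨q, hq, rfl⟩
      exact ⟨_, map_vadd_mem_coincidenceSet hcomm l.2 hq, rfl⟩)
    (comp_mem_diagonalHull _ (fun l hl ↦ comp_inl_mem_progressions hl id) hq₀.1) ⟨q₀, hq₀, rfl⟩
  obtain ⟨q, hq, hqy⟩ := hsub (const_mem_diagonalHull _ y)
  exact ⟨q, hq, fun k ↦ congrFun hqy k⟩

theorem exists_isOpen_forall_exists_mem_coincidenceSet [AddAction.IsMinimal ℤ X] {g : X → X}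
    (hg : Continuous g) (hcomm : ∀ (n : ℤ) x, g (n +ᵥ x) = n +ᵥ g x) {D : ℕ}
    (hne : (coincidenceSet g D).Nonempty) {O : Set X} (hO : IsOpen O) (hOne : O.Nonempty) :
    ∃ V : Set X, IsOpen V ∧ V.Nonempty ∧
      ∀ y ∈ V, ∃ q ∈ coincidenceSet g D, (∀ k, q (.inl k) = y) ∧ q (.inr 0) ∈ O := by
  have hclosed : IsClosed {q : ℤ ⊕ ℤ → X | q ∈ coincidenceSet g D ∧ ∀ k, q (.inl k) = q (.inl 0)} :=
    (isClosed_coincidenceSet hg D).inter <|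
      isClosed_setOf_forall_eq (fun _ ↦ continuous_apply _) fun _ ↦ continuous_apply _
  obtain ⟨x₀, hx₀⟩ := hOne
  obtain ⟨q₀, hq₀, hinl₀⟩ := exists_mem_coincidenceSet_inl_eq hg hcomm hne x₀
  obtain ⟨V, hV, ⟨v, hv, -⟩, hVsub⟩ := exists_isOpen_inter_image_subset (G := ℤ) hclosed
    ⟨q₀, hq₀, fun k ↦ by rw [hinl₀, hinl₀]⟩
    (fun n q hq ↦ ⟨vadd_mem_coincidenceSet hcomm n hq.1, fun k ↦ congrArg (n +ᵥ ·) (hq.2 k)⟩)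
    (continuous_apply (.inl 0)) (fun n ↦ continuous_const_vadd n) (fun _ _ ↦ rfl)
    (O := (fun q : ℤ ⊕ ℤ → X ↦ q (.inr 0)) ⁻¹' O) (hO.preimage (continuous_apply (Sum.inr 0)))
    (fun q _ ↦ hO.exists_vadd_mem ℤ (q (.inr 0)) ⟨x₀, hx₀⟩)
  refine ⟨V, hV, ⟨v, hv⟩, fun y hy ↦ ?_⟩
  obtain ⟨q, hq, hinl⟩ := exists_mem_coincidenceSet_inl_eq hg hcomm hne y
  obtain ⟨p, ⟨⟨hp, hpinl⟩, hpO⟩, hpy⟩ :=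
    hVsub ⟨hy, q, ⟨hq, fun k ↦ by rw [hinl, hinl]⟩, hinl 0⟩
  exact ⟨p, hp, fun k ↦ (hpinl k).trans hpy, hpO⟩

theorem exists_mem_diagonalHull_inl_succ_eq {g : X → X} (hg : Continuous g)
    (hcomm : ∀ (n : ℤ) x, g (n +ᵥ x) = n +ᵥ g x) {L : ℤ} {Z : Set X}
    (hZ : IsMinimalSet (AddSubgroup.zmultiples L) Z) (hgZ : MapsTo g Z Z) {n : ℕ} {f : Fin n → X}
    (hf : f ∈ closure {f | ∃ z ∈ Z, ∃ l ∈ progressions fun i : Fin n ↦ (i : ℤ),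
      f = fun i ↦ (L * l i) +ᵥ z}) :
    ∃ q ∈ diagonalHull X (shiftedProgressions L), ∀ i : Fin n,
      q (.inr (i * L)) = f i ∧ q (.inl ((i + 1) * L)) = g (f i) := by
  have hclosed : IsClosed {q : ℤ ⊕ ℤ → X | q ∈ diagonalHull X (shiftedProgressions L) ∧
      ∀ i : Fin n, q (.inl ((i + 1) * L)) = g (q (.inr (i * L)))} :=
    (isClosed_diagonalHull _).inter <|
      isClosed_setOf_forall_eq (fun _ ↦ continuous_apply _) fun _ ↦ hg.comp (continuous_apply _)
  let π (q : ℤ ⊕ ℤ → X) (i : Fin n) : X := q (.inr (i * L))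
  have hπ : Continuous π := continuous_pi fun _ ↦ continuous_apply _
  refine (closure_minimal ?_ (hclosed.isCompact.image hπ).isClosed hf).elim
    fun q ⟨⟨hq, hqg⟩, hqf⟩ ↦ ⟨q, hq, fun i ↦ ?_⟩
  · rintro _ ⟨z, hz, _, ⟨a, b, rfl⟩, rfl⟩
    have hw : -(L * b) +ᵥ g z ∈ Z :=
      hZ.vadd_mem ⟨-(L * b), AddSubgroup.mem_zmultiples_iff.2 ⟨-b, by simp [mul_comm]⟩⟩ (hgZ hz)
    refine ⟨_, ⟨map_vadd_mem_diagonalHull (elim_self_mem_shiftedProgressions L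
      (l := fun k ↦ L * a + b * k) ⟨_, _, rfl⟩) (elim_const_mem_diagonalHull (hZ.2 z hz ▸ hw)),
      fun i ↦ ?_⟩, ?_⟩
    · simp only [Sum.elim_inl, Sum.elim_inr, vadd_vadd, hcomm]
      congr 1
      ring
    · ext i
      simp only [π, Sum.elim_inr]
      congr 1
      ring
  · exact ⟨congrFun hqf i, (hqg i).trans (congrArg g (congrFun hqf i))⟩

theorem nonempty_coincidenceSet {g : X → X} (hg : Continuous g)
    (hcomm : ∀ (n : ℤ) x, g (n +ᵥ x) = n +ᵥ g x) {D : ℕ} {Z : Set X}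
    (hZ : IsMinimalSet (AddSubgroup.zmultiples ((D + 1).factorial : ℤ)) Z) (hgZ : MapsTo g Z Z)
    {x : X} (hx : (fun i : Fin (D + 1) ↦ g^[i] x) ∈ closure {f | ∃ z ∈ Z,
      ∃ l ∈ progressions fun i : Fin (D + 1) ↦ (i : ℤ),
        f = fun i ↦ ((D + 1).factorial * l i) +ᵥ z}) :
    (coincidenceSet g D).Nonempty := by
  obtain ⟨q, hq, hqx⟩ := exists_mem_diagonalHull_inl_succ_eq hg hcomm hZ hgZ hx
  have hinl (i : Fin (D + 1)) : q (.inl ((i + 1) * (D + 1).factorial)) = g^[i + 1] x := by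
    rw [(hqx i).2, Function.iterate_succ_apply']
  refine ⟨q, hq, fun i ↦ ?_, ?_⟩
  · have hsucc := (hqx i.succ).1
    have hcast := hinl i.castSucc
    rw [Fin.val_succ, Nat.cast_succ] at hsucc
    rw [Fin.val_castSucc] at hcast
    rw [hsucc, hcast]
  · convert comp_mem_diagonalHull _ (fun l hl ↦ progressions_mul_const_le _ ((D + 1).factorial : ℤ)
      (comp_inl_mem_progressions hl fun i : Fin (D + 2) ↦ i * ((D + 1).factorial : ℤ))) hq using 1
    ext i
    cases i using Fin.cases with
    | zero => simp
    | succ i =>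
      have hx₀ : q (.inr 0) = x := by simpa using (hqx 0).1
      simpa [hx₀] using (hinl i).symm

end CoincidenceSet

section CoincidenceSetToHull

variable {X : Type*} [TopologicalSpace X] [AddAction ℤ X]

theorem mem_diagonalHull_of_forall_isRealizable {ι : Type*} [Finite ι] {Λ : AddSubgroup (ι → ℤ)}
    {f : ι → X} (h : ∀ A : ι → Set X, (∀ i, IsOpen (A i) ∧ f i ∈ A i) → IsRealizable Λ univ A) :
    f ∈ diagonalHull X Λ := by
  rw [← (isClosed_diagonalHull Λ).closure_eq, mem_closure_iff]
  intro O hO hfO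
  obtain ⟨A, hA, hAO⟩ := isOpen_pi_iff'.1 hO f hfO
  obtain ⟨h, hh, hhA⟩ := h A hA
  exact ⟨h, hAO hhA, hh⟩

theorem hasTwistedReturns_of_mem_coincidenceSet {g : X → X} {D : ℕ} {q : ℤ ⊕ ℤ → X}
    (hq : q ∈ coincidenceSet g D) {U O : Set X} (hU : IsOpen U) (hO : IsOpen O)
    (hqU : ∀ k, q (.inl k) ∈ U) (hqO : q (.inr 0) ∈ O) : ∃ u ∈ O, HasTwistedReturns D U u := by
  let c (ε : Finset ℕ) : ℤ := -∑ j ∈ ε, ((D + 1).factorial / j : ℕ) * (D + 1 - j : ℤ)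
  have hW : IsOpen (({q : ℤ ⊕ ℤ → X | q (.inr 0) ∈ O} ∩
      ⋂ i : Fin D, {q | q (.inr ((i + 1) * (D + 1).factorial)) ∈ U}) ∩
      ⋂ ε ∈ (Finset.Icc 1 D).powerset, {q | q (.inl (c ε)) ∈ U}) :=
    ((hO.preimage (continuous_apply _)).inter
      (isOpen_iInter_of_finite fun _ ↦ hU.preimage (continuous_apply _))).inter
      (isOpen_biInter_finset fun _ _ ↦ hU.preimage (continuous_apply _))
  obtain ⟨x, _, ⟨a, b, s, rfl⟩, ⟨hx₀, hxU⟩, hxc⟩ := exists_vadd_mem_of_isOpen hq.1 hW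
    ⟨⟨hqO, mem_iInter.2 fun i ↦ mem_ofPred.2 (hq.2.1 i ▸ hqU _)⟩, mem_iInter₂.2 fun _ _ ↦ hqU _⟩
  refine ⟨a +ᵥ x, by simpa using hx₀, s, b, fun ε hε ↦ ?_, fun i hi ↦ ?_⟩
  · have := mem_iInter₂.1 hxc ε (Finset.mem_powerset.2 hε)
    simp only [mem_ofPred_eq, Sum.elim_inl, c] at this
    rw [vadd_vadd]
    convert this using 2
    ring
  · obtain ⟨hi₁, hiD⟩ := Finset.mem_Icc.1 hi
    have := mem_iInter.1 hxU ⟨i - 1, by lia⟩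
    simp only [mem_ofPred_eq, Sum.elim_inr] at this
    rw [vadd_vadd]
    convert this using 2
    push_cast [hi₁]
    ring

variable [ContinuousConstVAdd ℤ X] [CompactSpace X] [T2Space X] [AddAction.IsMinimal ℤ X]

open Function in
theorem exists_isOpen_forall_isRealizable_update_progressions {D : ℕ} {B : Fin (D + 2) → Set X}
    (hB : ∀ i, IsOpen (B i))
    (hreal : IsRealizable (progressions fun i : Fin (D + 2) ↦ (i : ℤ)) univ B) :
    ∃ U : Set X, IsOpen U ∧ U.Nonempty ∧ U ⊆ B 0 ∧ ∀ (u : X) (O : Set X), IsOpen O → u ∈ O →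
      HasTwistedReturns D U u →
      IsRealizable (progressions fun i : Fin (D + 2) ↦ (i : ℤ)) univ (update B 0 O) := by
  obtain ⟨x, _, ⟨a, b, rfl⟩, hx⟩ := hreal.exists_vadd_mem finite_univ fun i _ ↦ hB i
  obtain ⟨U, hU, hne, hsub, hret⟩ :=
    exists_isOpen_forall_isRealizable_update_twistedStage (D := D) (Nat.zero_le D)
    (A := fun p ↦ B (Fin.ofNat (D + 2) p.1)) (fun _ ↦ hB _)
    ⟨_, vadd_mem_diagonalHull (twistedExponent_mem a b 0) x, fun p hp ↦ by
      have hpD : p.1 < D + 2 := by have := hp.1; lia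
      simpa [twistedExponent, Nat.mod_eq_of_lt hpD] using hx (Fin.ofNat (D + 2) p.1) (mem_univ _)⟩
  refine ⟨U, hU, hne, hsub, fun u O hO hu hreturns ↦ ?_⟩
  obtain ⟨f, hf, hfA⟩ := hret u O hO hu hreturns
  refine ⟨f ∘ fun i : Fin (D + 2) ↦ ((i : ℕ), ∅), comp_mem_diagonalHull _ ?_ hf, fun i _ ↦ ?_⟩
  · rintro _ ⟨a, b, m, rfl⟩
    exact ⟨a, b, funext fun i ↦ by simp [twistedExponent]⟩
  · have := hfA (i, ∅) ⟨by lia, by lia, Finset.empty_subset _⟩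
    obtain rfl | hi := eq_or_ne i 0
    · simpa using this
    · simpa [update_of_ne, hi] using this

open Function in
theorem iterate_mem_diagonalHull_of_nonempty_coincidenceSet {g : X → X} (hg : Continuous g)
    (hcomm : ∀ (n : ℤ) x, g (n +ᵥ x) = n +ᵥ g x) {D : ℕ} (hne : (coincidenceSet g D).Nonempty)
    (x : X) :
    (fun i : Fin (D + 2) ↦ g^[i] x) ∈
      diagonalHull X (progressions fun i : Fin (D + 2) ↦ (i : ℤ)) := by
  refine mem_diagonalHull_of_forall_isRealizable fun A hA ↦ ?_
  have hO : IsOpen (⋂ i : Fin (D + 2), g^[i] ⁻¹' A i) :=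
    isOpen_iInter_of_finite fun i ↦ (hA i).1.preimage (hg.iterate i)
  obtain ⟨V, hV, ⟨v, hv⟩, hVq⟩ := exists_isOpen_forall_exists_mem_coincidenceSet hg hcomm hne hO
    ⟨x, mem_iInter.2 fun i ↦ (hA i).2⟩
  obtain ⟨q, hq, hqv, hqO⟩ := hVq v hv
  obtain ⟨U, hU, ⟨u, hu⟩, hUV, hret⟩ := exists_isOpen_forall_isRealizable_update_progressions
    (B := update A 0 V) (D := D)
    (fun i ↦ by
      obtain rfl | hi := eq_or_ne i 0
      · rwa [update_self]
      · rw [update_of_ne hi]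
        exact (hA i).1)
    ⟨_, hq.2.2, fun i _ ↦ by
      cases i using Fin.cases with
      | zero => simpa [hqv] using hv
      | succ i => simpa using mem_iInter.1 hqO i.succ⟩
  rw [update_self] at hUV
  obtain ⟨p, hp, hpu, hpO⟩ := hVq u (hUV hu)
  obtain ⟨w, hwO, hw⟩ := hasTwistedReturns_of_mem_coincidenceSet hp hU hO (fun k ↦ by rwa [hpu]) hpO
  obtain ⟨f, hf, hfA⟩ := hret w _ hO hwO hw
  rw [update_idem] at hfA
  refine ⟨f, hf, fun i _ ↦ ?_⟩
  obtain rfl | hi := eq_or_ne i 0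
  · have hf₀ := hfA 0 (mem_univ _)
    rw [update_self] at hf₀
    exact mem_iInter.1 hf₀ 0
  · simpa [update_of_ne hi] using hfA i (mem_univ _)

end CoincidenceSetToHull

theorem iterate_vadd_comp_apply {G X : Type*} [AddMonoid G] [AddAction G X] {S : X → X}
    (hcomm : ∀ (n : G) x, S (n +ᵥ x) = n +ᵥ S x) (a : G) (i : ℕ) (x : X) :
    (fun y ↦ a +ᵥ S y)^[i] x = (i • a) +ᵥ S^[i] x := by
  have hcomm_a : Function.Commute (a +ᵥ ·) S := fun y ↦ (hcomm a y).symm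
  exact (congrFun (hcomm_a.comp_iterate i) x).trans (vadd_iterate_apply a i _)

section RescaledAction

variable {X : Type*} [TopologicalSpace X] [AddAction ℤ X]

theorem IsMinimalSet.exists_vadd_mem_of_zmultiples [ContinuousConstVAdd ℤ X]
    [AddAction.IsMinimal ℤ X] {L : ℕ} (hL : 0 < L) {Z : Set X}
    (hZ : IsMinimalSet (AddSubgroup.zmultiples (L : ℤ)) Z) (y : X) :
    ∃ a : ℤ, a +ᵥ y ∈ Z := by
  have hclosed : IsClosed (⋃ r ∈ Finset.range L, ((r : ℤ) +ᵥ ·) ⁻¹' Z) :=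
    isClosed_biUnion_finset fun r _ ↦ hZ.isClosed.preimage (continuous_const_vadd _)
  obtain ⟨z, hz⟩ := hZ.1
  have hdense : closure (AddAction.orbit ℤ z) ⊆ ⋃ r ∈ Finset.range L, ((r : ℤ) +ᵥ ·) ⁻¹' Z := by
    refine closure_minimal ?_ hclosed
    rintro _ ⟨n, rfl⟩
    have hmod : 0 ≤ -n % L ∧ -n % L < L :=
      ⟨Int.emod_nonneg _ (by lia), Int.emod_lt_of_pos _ (by lia)⟩
    refine mem_iUnion₂.2 ⟨(-n % L).toNat, by simp; lia, ?_⟩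
    have hmem : -n % L + n ∈ AddSubgroup.zmultiples (L : ℤ) :=
      Int.mem_zmultiples_iff.2 ⟨-(-n / L), by linarith [Int.emod_add_mul_ediv (-n) L]⟩
    simpa [hmod.1, vadd_vadd] using hZ.vadd_mem ⟨_, hmem⟩ hz
  obtain ⟨r, -, hr⟩ := mem_iUnion₂.1 (hdense (AddAction.dense_orbit ℤ z y))
  exact ⟨r, hr⟩

/-- The action of `ℤ` on a minimal set of `Lℤ` in which `1` acts as `L`; it is not an instance
because it differs from the restriction of the given action. -/
abbrev IsMinimalSet.rescaledAddAction {L : ℤ} {Z : Set X}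
    (hZ : IsMinimalSet (AddSubgroup.zmultiples L) Z) : AddAction ℤ Z where
  vadd n z := ⟨(L * n) +ᵥ (z : X), hZ.vadd_mem ⟨L * n, Int.mem_zmultiples_iff.2 ⟨n, rfl⟩⟩ z.2⟩
  zero_vadd z := Subtype.ext (by change (L * 0) +ᵥ (z : X) = z; rw [mul_zero, zero_vadd])
  add_vadd m n z := Subtype.ext (by
    change (L * (m + n)) +ᵥ (z : X) = (L * m) +ᵥ (L * n) +ᵥ (z : X)
    rw [mul_add, add_vadd])

theorem IsMinimalSet.isMinimal_rescaledAddAction {L : ℤ} {Z : Set X}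
    (hZ : IsMinimalSet (AddSubgroup.zmultiples L) Z) :
    letI := hZ.rescaledAddAction
    AddAction.IsMinimal ℤ Z := by
  let := hZ.rescaledAddAction
  refine ⟨fun z ↦ Subtype.dense_iff.2 ?_⟩
  refine (hZ.2 z z.2).ge.trans (closure_mono ?_)
  rintro _ ⟨⟨_, hn⟩, rfl⟩
  obtain ⟨n, rfl⟩ := Int.mem_zmultiples_iff.1 hn
  exact ⟨_, ⟨n, rfl⟩, rfl⟩

theorem IsMinimalSet.coe_mem_closure {ι : Type*} {L : ℤ} {Z : Set X}
    (hZ : IsMinimalSet (AddSubgroup.zmultiples L) Z) {Λ : AddSubgroup (ι → ℤ)}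
    {f : ι → Z} (hf : letI := hZ.rescaledAddAction; f ∈ diagonalHull Z Λ) :
    (fun i ↦ (f i : X)) ∈ closure {f | ∃ z ∈ Z, ∃ l ∈ Λ, f = fun i ↦ (L * l i) +ᵥ z} := by
  let := hZ.rescaledAddAction
  refine map_mem_closure (f := fun (f : ι → Z) i ↦ (f i : X)) (by fun_prop) hf ?_
  rintro _ ⟨z, l, hl, rfl⟩
  exact ⟨z, z.2, l, hl, rfl⟩

theorem IsMinimalSet.continuousConstVAdd_rescaledAddAction [ContinuousConstVAdd ℤ X] {L : ℤ}
    {Z : Set X} (hZ : IsMinimalSet (AddSubgroup.zmultiples L) Z) :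
    letI := hZ.rescaledAddAction
    ContinuousConstVAdd ℤ Z :=
  let := hZ.rescaledAddAction
  ⟨fun n ↦ (continuous_subtype_val.const_vadd (L * n)).subtype_mk _⟩

end RescaledAction

theorem iterate_mem_diagonalHull (d : ℕ) {X : Type*} [TopologicalSpace X] [CompactSpace X]
    [T2Space X] [AddAction ℤ X] [ContinuousConstVAdd ℤ X] [AddAction.IsMinimal ℤ X] {S : X → X}
    (hS : Continuous S) (hcomm : ∀ (n : ℤ) x, S (n +ᵥ x) = n +ᵥ S x) (x : X) :
    (fun i : Fin d ↦ S^[i] x) ∈ diagonalHull X (progressions fun i : Fin d ↦ (i : ℤ)) := by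
  induction d generalizing X with
  | zero =>
    simpa only [Subsingleton.elim (fun i : Fin 0 ↦ S^[i] x) fun _ ↦ x]
      using const_mem_diagonalHull _ x
  | succ d ih =>
    obtain _ | D := d
    · simpa using const_mem_diagonalHull _ x
    have : Nonempty X := ⟨x⟩
    obtain ⟨Z, hZ⟩ := exists_isMinimalSet
      (G := AddSubgroup.zmultiples ((D + 1).factorial : ℤ)) (Y := X)
    obtain ⟨z, hz⟩ := hZ.1
    obtain ⟨a, ha⟩ := hZ.exists_vadd_mem_of_zmultiples (D + 1).factorial_pos (S z)
    set g : X → X := fun y ↦ a +ᵥ S y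
    have hg : Continuous g := hS.const_vadd a
    have hgcomm (n : ℤ) (y : X) : g (n +ᵥ y) = n +ᵥ g y := by
      simp only [g, hcomm, vadd_comm n]
    have hgZ : MapsTo g Z Z := hZ.mapsTo hg (fun n ↦ hgcomm n) hz ha
    let := hZ.rescaledAddAction
    have := hZ.isMinimal_rescaledAddAction
    have := hZ.continuousConstVAdd_rescaledAddAction
    have := isCompact_iff_compactSpace.1 hZ.isClosed.isCompact
    have hmem := hZ.coe_mem_closure <| ih (hg.restrict hgZ)
      (fun n z ↦ Subtype.ext (hgcomm _ z)) ⟨z, hz⟩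
    simp only [MapsTo.coe_iterate_restrict] at hmem
    have hgx := iterate_mem_diagonalHull_of_nonempty_coincidenceSet hg hgcomm
      (nonempty_coincidenceSet hg hgcomm hZ hgZ hmem) x
    have huntwist : (fun i : Fin (D + 2) ↦ 0 + -a * (i : ℤ)) ∈ progressions _ := ⟨0, -a, rfl⟩
    convert map_vadd_mem_diagonalHull huntwist hgx using 2 with i
    rw [iterate_vadd_comp_apply hcomm, vadd_vadd]
    simp [mul_comm]

section NdClosure

variable {X : Type*} [TopologicalSpace X]

/-- The set `N_d(X, T)` of the definition `Nd`, for a homeomorphism `T` of any topological space. -/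
def progressionClosure (T : X ≃ₜ X) (d : ℕ) : Set (Fin d → X) :=
  closure {f | ∃ x : X, ∃ n : ℤ, ∀ i : Fin d, f i = (T.toEquiv ^ (((i : ℕ) + 1 : ℤ) * n)) x}

theorem coe_toEquiv_zpow (T : X ≃ₜ X) (n : ℤ) : ⇑(T.toEquiv ^ n) = ⇑(T ^ n) := by
  let toPerm : (X ≃ₜ X) →* Equiv.Perm X :=
    { toFun := Homeomorph.toEquiv, map_one' := rfl, map_mul' := fun _ _ ↦ rfl }
  exact congrArg DFunLike.coe (map_zpow toPerm T n).symm

/-- The dynamical system `(X, T)` as an action of `ℤ`: `n` acts as `T ^ n`. -/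
abbrev zpowAddAction (T : X ≃ₜ X) : AddAction ℤ X where
  vadd n x := (T ^ n) x
  zero_vadd _ := rfl
  add_vadd m n x := DFunLike.congr_fun (zpow_add T m n) x

theorem diagonalHull_progressions_eq_progressionClosure (T : X ≃ₜ X) (d : ℕ) :
    letI := zpowAddAction T
    diagonalHull X (progressions fun i : Fin d ↦ (i : ℤ)) = progressionClosure T d := by
  let := zpowAddAction T
  have hzpow (n : ℤ) (x : X) : (T.toEquiv ^ n) x = n +ᵥ x := congrFun (coe_toEquiv_zpow T n) x
  refine congrArg closure (Subset.antisymm ?_ ?_)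
  · rintro _ ⟨x, _, ⟨a, b, rfl⟩, rfl⟩
    refine ⟨(a - b) +ᵥ x, b, fun i ↦ ?_⟩
    rw [hzpow, vadd_vadd]
    exact congrArg (· +ᵥ x) (by ring)
  · rintro f ⟨x, n, hf⟩
    refine ⟨x, _, ⟨n, n, rfl⟩, funext fun i ↦ ?_⟩
    rw [hf, hzpow]
    congr 1
    ring

theorem progressionClosure_subset_of_commute [CompactSpace X] [T2Space X] {S T : X ≃ₜ X}
    (hcomm : Commute S T) (hT : ∀ x : X, Dense (range fun n : ℤ ↦ (T.toEquiv ^ n) x)) (d : ℕ) :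
    progressionClosure S d ⊆ progressionClosure T d := by
  let := zpowAddAction T
  have : AddAction.IsMinimal ℤ X := ⟨fun x ↦ by
    have := hT x
    simp only [coe_toEquiv_zpow] at this
    exact this⟩
  have : ContinuousConstVAdd ℤ X := ⟨fun n ↦ (T ^ n).continuous⟩
  rw [← diagonalHull_progressions_eq_progressionClosure T]
  refine closure_minimal ?_ (isClosed_diagonalHull _)
  rintro f ⟨x, n, hf⟩
  have hiter : f = fun i : Fin d ↦ (⇑(S ^ n))^[i] ((S ^ n) x) := funext fun i ↦ by
    rw [hf, coe_toEquiv_zpow, ← Function.iterate_succ_apply, mul_comm, zpow_mul, ← Nat.cast_succ,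
      zpow_natCast]
    exact congrFun (hom_coe_pow (fun e : X ≃ₜ X ↦ ⇑e) rfl (fun _ _ ↦ rfl) (S ^ n) _) x
  rw [hiter]
  exact iterate_mem_diagonalHull d (S ^ n).continuous
    (fun m y ↦ DFunLike.congr_fun (hcomm.zpow_zpow n m) y) _

theorem nd_eq_of_commuting_minimal_homeos_general [CompactSpace X] [T2Space X] {S T : X ≃ₜ X}
    (hcomm : Commute S T) (hS : ∀ x : X, Dense (range fun n : ℤ ↦ (S.toEquiv ^ n) x))
    (hT : ∀ x : X, Dense (range fun n : ℤ ↦ (T.toEquiv ^ n) x)) (d : ℕ) :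
    progressionClosure S d = progressionClosure T d :=
  (progressionClosure_subset_of_commute hcomm hT d).antisymm
    (progressionClosure_subset_of_commute hcomm.symm hS d)

end NdClosure

/-- If `S` and `T` are commuting homeomorphisms of a compact metric space `X`
such that both `(X,S)` and `(X,T)` are minimal, then `N_d(X,S) = N_d(X,T)` for
each `d ∈ ℕ`. -/
theorem nd_eq_of_commuting_minimal_homeos
    {X : Type*} [MetricSpace X] [CompactSpace X] (S T : X ≃ₜ X)
    (hcomm : ∀ x : X, S (T x) = T (S x))
    (hSmin : ∀ x : X, Dense (Set.range fun n : ℤ => (S.toEquiv ^ n) x))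
    (hTmin : ∀ x : X, Dense (Set.range fun n : ℤ => (T.toEquiv ^ n) x))
    (d : ℕ) :
    Nd S d = Nd T d :=
  nd_eq_of_commuting_minimal_homeos_general (Homeomorph.ext hcomm) hSmin hTmin d
end

section
/- Let (X,{T^t}_{t∈ℝ}) be a minimal ℝ-flow, d ∈ ℕ, and let π:(X,{T^t})→(Y,{T^t}) be a factor map between minimal ℝ-flows with R_π = RP^[d](X,ℝ). Then for any distinct nonzero real numbers α₁,…,α_d there is a dense G_δ set Ω ⊆ X such that for every x ∈ Ω, (π⁻¹(π(x)))^d ⊆ closure{(T^{α₁t}x, T^{α₂t}x, …, T^{α_dt}x) : t ∈ ℝ}. -/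
/-- The regionally proximal relation of order `d` of an `ℝ`-flow `φ` on a metric
space `X`. -/
def RPdFlow {X : Type*} [MetricSpace X] (φ : ℝ → X → X) (d : ℕ) : Set (X × X) :=
  {p | ∀ δ > 0, ∃ x' y' : X, dist p.1 x' < δ ∧ dist p.2 y' < δ ∧
    ∃ t : Fin d → ℝ, ∀ ε : Fin d → Bool, ε ≠ (fun _ => false) →
      dist (φ (∑ i, if ε i then t i else 0) x')
        (φ (∑ i, if ε i then t i else 0) y') < δ}

/-!
A *configuration space* of a `V`-space `X` is the closure of `{(F i w +ᵥ x)ᵢ}` for homomorphisms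
`F i` into `V`; cubes and progressions are both of this form. If `(x, y)` is regionally proximal,
some cube at `x` stays a cube when its vertex `x` is changed to `y`. For generic `x` every cube at
`x` is a limit of translates of the constant cube. A minimal idempotent argument carries the given
cube back to the constant one and from there to any other, so the replacement is possible in
*every* cube at `x`.

To pass from cubes to progressions, note that for distinct slopes `a` there are, for each `j`,
directions of the parameter `(p, t)` of `(p + aᵢ t)ᵢ` that move position `none` but not position
`j`. Cubes spanned by these directions give a larger configuration space `M`, in which position
`none` runs through the cubes already treated. Starting from a replacement there, the directions are
flattened one at a time; flattening the `j`-th leaves position `j` unchanged. Here one glues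
configurations of `M` sharing some positions, which is possible at a generic configuration, where
all restrictions to subsets of positions are open. In the end only the entry `none` has changed.
Replacing all entries of a constant progression in turn then gives the theorem.
-/

open Filter Topology Set

/-! ### Ultrafilters acting on compact spaces -/

section UltrafilterAction

attribute [local instance] Ultrafilter.add Ultrafilter.addSemigroup

theorem ultrafilter_map_add {M N F : Type*} [Add M] [Add N] [FunLike F M N] [AddHomClass F M N]
    (f : F) (p q : Ultrafilter M) : (p + q).map f = p.map f + q.map f := by
  refine Ultrafilter.coe_inj.mp (Filter.ext' fun P => ?_)
  simp only [Ultrafilter.eventually_add, Ultrafilter.coe_map, eventually_map, map_add]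

theorem ultrafilter_pure_zero_add {M : Type*} [AddZeroClass M] (p : Ultrafilter M) :
    pure 0 + p = p :=
  Ultrafilter.coe_inj.mp <| Filter.ext' fun P => by simp [Ultrafilter.eventually_add]

theorem ultrafilter_add_pure_zero {M : Type*} [AddZeroClass M] (p : Ultrafilter M) :
    p + pure 0 = p :=
  Ultrafilter.coe_inj.mp <| Filter.ext' fun P => by simp [Ultrafilter.eventually_add]

theorem ultrafilter_map_const {α β : Type*} (p : Ultrafilter α) (b : β) :
    p.map (fun _ => b) = pure b :=
  Ultrafilter.coe_inj.mp Filter.map_const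

/-- A nonempty closed left ideal of an additive topological semigroup. -/
structure IsClosedLeftIdeal {S : Type*} [Add S] [TopologicalSpace S] (L : Set S) : Prop where
  isClosed : IsClosed L
  nonempty : L.Nonempty
  add_mem : ∀ s, ∀ p ∈ L, s + p ∈ L

theorem exists_minimal_isClosedLeftIdeal (S : Type*) [Add S] [Nonempty S]
    [TopologicalSpace S] [CompactSpace S] : ∃ L : Set S, Minimal IsClosedLeftIdeal L := by
  refine zorn_superset {L : Set S | IsClosedLeftIdeal L} fun c hc hchain =>
    ⟨⋂₀ c, ⟨isClosed_sInter fun t ht => (hc ht).isClosed, ?_, fun s p hp t ht =>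
      (hc ht).add_mem s p (hp t ht)⟩, fun _ => sInter_subset_of_mem⟩
  obtain rfl | hne := c.eq_empty_or_nonempty
  · simp only [sInter_empty, univ_nonempty]
  · have := hne.to_subtype
    have hdir : DirectedOn (· ⊇ ·) c := IsChain.directedOn hchain.symm
    exact IsCompact.nonempty_sInter_of_directed_nonempty_isCompact_isClosed hdir
      (fun t ht => (hc ht).nonempty) (fun t ht => (hc ht).isClosed.isCompact)
      fun t ht => (hc ht).isClosed

theorem exists_add_eq_of_minimal_isClosedLeftIdeal {S : Type*} [AddSemigroup S]
    [TopologicalSpace S] [CompactSpace S] [T2Space S] (hcont : ∀ r : S, Continuous (· + r))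
    {L : Set S} (hL : Minimal IsClosedLeftIdeal L) {p q : S} (hp : p ∈ L) (hq : q ∈ L) :
    ∃ r, r + p = q := by
  have hideal : IsClosedLeftIdeal (range (· + p)) :=
    ⟨(isCompact_range (hcont p)).isClosed, ⟨_, p, rfl⟩, by
      rintro s _ ⟨r, rfl⟩
      exact ⟨s + r, add_assoc s r p⟩⟩
  have hsub : range (· + p) ⊆ L := by
    rintro _ ⟨r, rfl⟩
    exact hL.prop.add_mem r p hp
  exact hL.le_of_le hideal hsub hq

variable {G X : Type*} [AddMonoid G] [AddAction G X] [TopologicalSpace X]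

/-- The action of an ultrafilter `p` on `G` on a compact `G`-space: the point `ultraVAdd p x` is
the limit of `t +ᵥ x` along `p`. It realizes the enveloping semigroup as a quotient of
`Ultrafilter G`. -/
noncomputable def ultraVAdd (p : Ultrafilter G) (x : X) : X :=
  Ultrafilter.extend (fun t => t +ᵥ x) p

theorem ultraVAdd_pure [T2Space X] (t : G) (x : X) : ultraVAdd (pure t) x = t +ᵥ x :=
  ultrafilter_extend_pure _ t

variable [CompactSpace X] [T2Space X]

theorem tendsto_ultraVAdd (p : Ultrafilter G) (x : X) :
    Tendsto (fun t : G => t +ᵥ x) p (𝓝 (ultraVAdd p x)) :=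
  ultrafilter_extend_eq_iff.1 rfl

theorem ultraVAdd_eq_of_tendsto {p : Ultrafilter G} {x y : X}
    (h : Tendsto (fun t : G => t +ᵥ x) p (𝓝 y)) : ultraVAdd p x = y :=
  ultrafilter_extend_eq_iff.2 h

theorem continuous_ultraVAdd (x : X) : Continuous fun p : Ultrafilter G => ultraVAdd p x :=
  continuous_ultrafilter_extend _

theorem ultraVAdd_add [ContinuousConstVAdd G X] (p q : Ultrafilter G) (x : X) :
    ultraVAdd (p + q) x = ultraVAdd p (ultraVAdd q x) := by
  refine ultraVAdd_eq_of_tendsto ((nhds_basis_opens _).tendsto_right_iff.2 ?_)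
  rintro O ⟨hO, hOo⟩
  rw [Ultrafilter.eventually_add]
  filter_upwards [(tendsto_ultraVAdd p _).eventually (hOo.mem_nhds hO)] with s hs
  filter_upwards [((tendsto_ultraVAdd q x).const_vadd s).eventually (hOo.mem_nhds hs)] with t ht
  rwa [add_vadd]

theorem exists_ultrafilter_ultraVAdd_eq {W ι : Type*} {ℓ : ι → W → G} {x : X} {q : ι → X}
    (hq : q ∈ closure (range fun v i => ℓ i v +ᵥ x)) :
    ∃ p : Ultrafilter W, ∀ i, ultraVAdd (p.map (ℓ i)) x = q i := by
  have hne : NeBot (comap (fun v i => ℓ i v +ᵥ x) (𝓝 q)) :=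
    comap_neBot_iff_frequently.2 (mem_closure_iff_frequently.1 hq)
  refine ⟨Ultrafilter.of (comap (fun v i => ℓ i v +ᵥ x) (𝓝 q)), fun i => ?_⟩
  have htendsto : Tendsto (fun v i => ℓ i v +ᵥ x)
      (Ultrafilter.of (comap (fun v i => ℓ i v +ᵥ x) (𝓝 q))) (𝓝 q) :=
    tendsto_comap.mono_left (Ultrafilter.of_le _)
  exact ultraVAdd_eq_of_tendsto (tendsto_pi_nhds.1 htendsto i)

theorem exists_idempotent_ultraVAdd_eq [ContinuousConstVAdd G X] [AddAction.IsMinimal G X]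
    (x : X) : ∃ u : Ultrafilter G, u + u = u ∧ ultraVAdd u x = x ∧
      ∀ s, (s + u) + (s + u) = s + u → u + (s + u) = u := by
  obtain ⟨L, hL⟩ := exists_minimal_isClosedLeftIdeal (Ultrafilter G)
  have hfix : (L ∩ {p | ultraVAdd p x = x}).Nonempty := by
    obtain ⟨p₀, hp₀⟩ := hL.prop.nonempty
    have horbit : range (fun t : G => t +ᵥ ultraVAdd p₀ x) ⊆ (ultraVAdd · x) '' L := by
      rintro _ ⟨t, rfl⟩
      exact ⟨pure t + p₀, hL.prop.add_mem _ _ hp₀, by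
        simp only [ultraVAdd_add, ultraVAdd_pure]⟩
    have hclosed : IsClosed ((ultraVAdd · x) '' L) :=
      (hL.prop.isClosed.isCompact.image (continuous_ultraVAdd x)).isClosed
    exact closure_minimal horbit hclosed (denseRange_vadd G _ x)
  obtain ⟨u, ⟨huL, hux⟩, huu⟩ := exists_idempotent_in_compact_add_subsemigroup
    Ultrafilter.continuous_add_left (L ∩ {p | ultraVAdd p x = x}) hfix
    (hL.prop.isClosed.inter (isClosed_singleton.preimage (continuous_ultraVAdd x))).isCompact
    fun p hp q hq => ⟨hL.prop.add_mem p q hq.1, by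
      rw [mem_ofPred_eq, ultraVAdd_add, hq.2.out, hp.2.out]⟩
  refine ⟨u, huu, hux, fun s hs => ?_⟩
  obtain ⟨r, hr⟩ := exists_add_eq_of_minimal_isClosedLeftIdeal Ultrafilter.continuous_add_left hL
    (hL.prop.add_mem s u huL) huL
  calc u + (s + u) = r + (s + u) + (s + u) := by rw [hr]
    _ = r + ((s + u) + (s + u)) := add_assoc _ _ _
    _ = u := by rw [hs, hr]

/-- If `p` carries `x` to `q`, then an idempotent of the left ideal generated by `p + U` projects
under each nonzero `ℓ i` into the minimal left ideal of the idempotent `u` fixing `x`, and `u`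
absorbs it. -/
theorem const_mem_closure_range_vadd {W ι : Type*} [AddMonoid W] [ContinuousConstVAdd G X]
    [AddAction.IsMinimal G X] (ℓ : ι → W →+ G)
    (hlift : ∀ u : Ultrafilter G, u + u = u →
      ∃ U : Ultrafilter W, ∀ i, ℓ i = 0 ∨ U.map (ℓ i) = u)
    {x : X} {q : ι → X} (hq : q ∈ closure (range fun v i => ℓ i v +ᵥ x)) :
    (fun _ => x) ∈ closure (range fun v i => ℓ i v +ᵥ q i) := by
  obtain ⟨u, huu, hux, habs⟩ := exists_idempotent_ultraVAdd_eq (G := G) x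
  obtain ⟨U, hU⟩ := hlift u huu
  obtain ⟨p, hp⟩ := exists_ultrafilter_ultraVAdd_eq hq
  obtain ⟨_, ⟨s, rfl⟩, hidem⟩ := exists_idempotent_in_compact_add_subsemigroup
    (Ultrafilter.continuous_add_left (M := W)) (range (· + (p + U))) (range_nonempty _)
    (isCompact_range (Ultrafilter.continuous_add_left _)) (by
      rintro _ ⟨a, rfl⟩ _ ⟨b, rfl⟩
      exact ⟨a + (p + U) + b, add_assoc _ _ _⟩)
  have hreturn (i : ι) : ultraVAdd ((U + s).map (ℓ i)) (q i) = x := by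
    rw [← hp i]
    obtain hi | hi := hU i
    · have hzero (r : Ultrafilter W) : r.map (ℓ i) = pure 0 := by
        rw [hi]
        exact ultrafilter_map_const r 0
      simp only [hzero, ultraVAdd_pure, zero_vadd]
    · have hsp : u + (s.map (ℓ i) + p.map (ℓ i) + u) = u := habs _ <| by
        simpa only [ultrafilter_map_add, hi, add_assoc] using congrArg (Ultrafilter.map (ℓ i)) hidem
      have := congrArg (ultraVAdd · x) hsp
      simpa only [ultrafilter_map_add, hi, ultraVAdd_add, hux] using this
  refine mem_closure_of_tendsto (b := (↑(U + s) : Filter W)) (tendsto_pi_nhds.2 fun i => ?_)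
    (Eventually.of_forall mem_range_self)
  have hlim := tendsto_ultraVAdd ((U + s).map (ℓ i)) (q i)
  rwa [hreturn i, Ultrafilter.coe_map, tendsto_map'_iff] at hlim

theorem const_mem_closure_range_vadd_of_section {W ι : Type*} [AddMonoid W]
    [ContinuousConstVAdd G X] [AddAction.IsMinimal G X] (ℓ : ι → W →+ G) (e : G → W)
    (he : ∀ i g, ℓ i (e g) = g) {x : X} {q : ι → X}
    (hq : q ∈ closure (range fun v i => ℓ i v +ᵥ x)) :
    (fun _ => x) ∈ closure (range fun v i => ℓ i v +ᵥ q i) :=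
  const_mem_closure_range_vadd ℓ (fun u _ => ⟨u.map e, fun i => .inr <| by
    rw [Ultrafilter.map_map, (funext (he i) : ℓ i ∘ e = id), Ultrafilter.map_id]⟩) hq

end UltrafilterAction

/-! ### Generic points -/

section GenericPoints

open scoped Pointwise

theorem eventually_residual_mem_of_mem_closure {X : Type*} [TopologicalSpace X]
    {S : Set (Set X)} (hS : S.Countable) (hopen : ∀ O ∈ S, IsOpen O) :
    ∀ᶠ x in residual X, ∀ O ∈ S, x ∈ closure O → x ∈ O := by
  refine (eventually_countable_ball hS).2 fun O hO => ?_
  have hres : (frontier O)ᶜ ∈ residual X := by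
    refine residual_of_dense_open isClosed_frontier.isOpen_compl ?_
    rw [← interior_eq_empty_iff_dense_compl, ← frontier_compl]
    exact interior_frontier (hopen O hO).isClosed_compl
  filter_upwards [hres] with x hx hcl
  by_contra hxO
  exact hx ((hopen O hO).frontier_eq ▸ ⟨hcl, hxO⟩)

theorem eventually_residual_mem_closure_range {X Z V : Type*} [TopologicalSpace X]
    [TopologicalSpace Z] [SecondCountableTopology Z] {g : V → X → Z}
    (hg : ∀ v, Continuous (g v)) :
    ∀ᶠ x in residual X, ∀ z, (x, z) ∈ closure (range fun p : V × X => (p.2, g p.1 p.2)) →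
      z ∈ closure (range fun v => g v x) := by
  have hbasis := TopologicalSpace.isBasis_countableBasis Z
  have hgen := eventually_residual_mem_of_mem_closure
    ((TopologicalSpace.countable_countableBasis Z).image fun O => ⋃ v, g v ⁻¹' O)
    (forall_mem_image.2 fun O hO => isOpen_iUnion fun v => (hbasis.isOpen hO).preimage (hg v))
  filter_upwards [hgen] with x hx z hz
  refine hbasis.mem_closure_iff.2 fun O hO hzO => ?_
  have hxcl : x ∈ closure (⋃ v, g v ⁻¹' O) := mem_closure_iff.2 fun N hN hxN => by
    obtain ⟨_, ⟨hpN, hpO⟩, ⟨v, x'⟩, rfl⟩ := mem_closure_iff.1 hz (N ×ˢ O)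
      (hN.prod (hbasis.isOpen hO)) ⟨hxN, hzO⟩
    exact ⟨x', hpN, mem_iUnion.2 ⟨v, hpO⟩⟩
  obtain ⟨v, hv⟩ := mem_iUnion.1 (hx _ (mem_image_of_mem _ hO) hxcl)
  exact ⟨_, hv, v, rfl⟩

/-- A map is semi-open if the image of every nonempty open set has nonempty interior. Factor maps
of minimal systems are semi-open, but in general not open. -/
def SemiOpen {A C : Type*} [TopologicalSpace A] [TopologicalSpace C] (θ : A → C) : Prop :=
  ∀ O : Set A, IsOpen O → O.Nonempty → (interior (θ '' O)).Nonempty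

theorem semiOpen_of_isMinimal (V : Type*) {A C : Type*} [AddGroup V]
    [TopologicalSpace A] [CompactSpace A] [R1Space A] [AddAction V A] [ContinuousConstVAdd V A]
    [AddAction.IsMinimal V A] [TopologicalSpace C] [T2Space C] [AddAction V C]
    [ContinuousConstVAdd V C] {θ : A → C} (hθ : Continuous θ) (hsurj : Function.Surjective θ)
    (hequiv : ∀ (v : V) a, θ (v +ᵥ a) = v +ᵥ θ a) : SemiOpen θ := by
  intro O hO ⟨a, ha⟩
  have : CompactSpace C := hsurj.compactSpace hθ
  have : Nonempty C := ⟨θ a⟩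
  obtain ⟨K, hK, hKclosed, hKO⟩ := exists_mem_nhds_isClosed_subset (hO.mem_nhds ha)
  obtain ⟨I, hI⟩ := isCompact_univ.exists_finite_cover_vadd V isOpen_interior
    ⟨a, mem_interior_iff_mem_nhds.2 hK⟩
  have hclosed : IsClosed (θ '' K) := (hKclosed.isCompact.image hθ).isClosed
  have hcover : ⋃ v : I, (v : V) +ᵥ (θ '' K) = univ := by
    refine eq_univ_of_forall fun c => ?_
    obtain ⟨a', rfl⟩ := hsurj c
    obtain ⟨v, hv, b, hb, rfl⟩ := mem_iUnion₂.1 (hI (mem_univ a'))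
    exact mem_iUnion.2 ⟨⟨v, hv⟩, θ b, mem_image_of_mem θ (interior_subset hb), (hequiv v b).symm⟩
  obtain ⟨v, hv⟩ := nonempty_interior_of_iUnion_of_closed (fun v : I => hclosed.vadd (v : V)) hcover
  rw [interior_vadd, vadd_set_nonempty] at hv
  exact hv.mono (interior_mono (image_mono hKO))

theorem eventually_residual_nhds_le_map {A C : Type*} [TopologicalSpace A]
    [SecondCountableTopology A] [TopologicalSpace C] {θ : A → C} (hθ : Continuous θ)
    (hsemi : SemiOpen θ) : ∀ᶠ a in residual A, 𝓝 (θ a) ≤ map θ (𝓝 a) := by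
  have hbasis := TopologicalSpace.isBasis_countableBasis A
  have hgen := eventually_residual_mem_of_mem_closure
    ((TopologicalSpace.countable_countableBasis A).image fun O => θ ⁻¹' interior (θ '' O))
    (forall_mem_image.2 fun O _ => isOpen_interior.preimage hθ)
  filter_upwards [hgen] with a ha
  refine le_map_iff.2 fun N hN => ?_
  obtain ⟨O, hO, haO, hON⟩ := hbasis.mem_nhds_iff.1 hN
  have hacl : a ∈ closure (θ ⁻¹' interior (θ '' O)) := mem_closure_iff.2 fun N' hN' haN' => by
    obtain ⟨_, hc⟩ := hsemi (N' ∩ O) (hN'.inter (hbasis.isOpen hO)) ⟨a, haN', haO⟩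
    obtain ⟨b, hb, rfl⟩ := interior_subset hc
    exact ⟨b, hb.1, interior_mono (image_mono inter_subset_right) hc⟩
  exact mem_of_superset (mem_interior_iff_mem_nhds.1 (ha _ (mem_image_of_mem _ hO) hacl))
    (image_mono hON)

theorem eventually_residual_dense_fiber_of_isOpen {A B : Type*} [TopologicalSpace A]
    [SecondCountableTopology A] [TopologicalSpace B] {p : A → B} (hp : Continuous p)
    (hsemi : SemiOpen p) {U : Set A} (hU : IsOpen U) (hdense : Dense U) :
    ∀ᶠ b in residual B, Dense ((↑) ⁻¹' U : Set (p ⁻¹' {b})) := by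
  have hbasis := TopologicalSpace.isBasis_countableBasis A
  have hgen := eventually_residual_mem_of_mem_closure
    ((TopologicalSpace.countable_countableBasis A).image fun O => interior (p '' (O ∩ U)))
    (forall_mem_image.2 fun O _ => isOpen_interior)
  filter_upwards [hgen] with b hb
  rintro ⟨a, rfl⟩
  refine mem_closure_iff_nhds.2 fun N hN => ?_
  obtain ⟨N', hN', hN'N⟩ := mem_nhds_subtype _ _ _ |>.1 hN
  obtain ⟨O, hO, haO, hON⟩ := hbasis.mem_nhds_iff.1 hN'
  have hcl : p a ∈ closure (interior (p '' (O ∩ U))) := mem_closure_iff.2 fun M hM haM => by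
    have hopen : IsOpen (O ∩ p ⁻¹' M) := (hbasis.isOpen hO).inter (hM.preimage hp)
    obtain ⟨_, hc⟩ := hsemi _ (hopen.inter hU) (hdense.inter_open_nonempty _ hopen ⟨a, haO, haM⟩)
    obtain ⟨a', ha', rfl⟩ := interior_subset hc
    exact ⟨_, ha'.1.2, interior_mono (image_mono (inter_subset_inter_left U inter_subset_left)) hc⟩
  obtain ⟨a', ha', hpa'⟩ := interior_subset (hb _ (mem_image_of_mem _ hO) hcl)
  exact ⟨⟨a', hpa'⟩, hN'N (hON ha'.1), ha'.2⟩

/-- A topological Kuratowski–Ulam theorem along a semi-open map. -/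
theorem eventually_residual_dense_fiber {A B : Type*} [TopologicalSpace A] [CompactSpace A]
    [R1Space A] [SecondCountableTopology A] [TopologicalSpace B] [T1Space B] {p : A → B}
    (hp : Continuous p) (hsemi : SemiOpen p) {G : Set A} (hG : G ∈ residual A) :
    ∀ᶠ b in residual B, Dense ((↑) ⁻¹' G : Set (p ⁻¹' {b})) := by
  obtain ⟨S, hSopen, hSdense, hScount, hSG⟩ := mem_residual_iff.1 hG
  have hgen := (eventually_countable_ball hScount).2 fun U hU =>
    eventually_residual_dense_fiber_of_isOpen hp hsemi (hSopen U hU) (hSdense U hU)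
  filter_upwards [hgen] with b hb
  have : CompactSpace (p ⁻¹' {b}) :=
    isCompact_iff_compactSpace.1 (isClosed_singleton.preimage hp).isCompact
  refine (dense_biInter_of_isOpen
    (fun U hU => (hSopen U hU).preimage continuous_subtype_val) hScount hb).mono ?_
  simpa only [← preimage_iInter₂, ← sInter_eq_biInter] using preimage_mono hSG

theorem mem_closure_fiberProduct {A B C : Type*} [TopologicalSpace A] [TopologicalSpace B]
    [TopologicalSpace C] {θ : A → C} {η : B → C} {a : A} {b : B} (hθ : 𝓝 (θ a) ≤ map θ (𝓝 a))
    (hη : ContinuousAt η b) (hab : θ a = η b) {S : Set B} (hb : b ∈ closure S) :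
    (a, b) ∈ closure {p : A × B | p.2 ∈ S ∧ θ p.1 = η p.2} := by
  refine mem_closure_iff_nhds.2 fun N hN => ?_
  obtain ⟨N₁, hN₁, N₂, hN₂, hN⟩ := mem_nhds_prod_iff.1 hN
  have himage : θ '' N₁ ∈ 𝓝 (η b) := hab ▸ hθ (image_mem_map hN₁)
  obtain ⟨b', ⟨hb'N, a', ha'N, ha'⟩, hb'S⟩ :=
    mem_closure_iff_nhds.1 hb _ (inter_mem hN₂ (hη himage))
  exact ⟨(a', b'), hN ⟨ha'N, hb'N⟩, hb'S, ha'⟩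

theorem isClosed_setOf_exists_eqOn {ι X : Type*} [TopologicalSpace X] [T2Space X]
    {M : Set (ι → X)} (hM : IsCompact M) (S : Set ι) :
    IsClosed {w : ι → X | ∃ n ∈ M, EqOn n w S} := by
  have hrestrict : Continuous (S.domRestrict : (ι → X) → S → X) := Pi.continuous_domRestrict S
  have heq : {w : ι → X | ∃ n ∈ M, EqOn n w S} = S.domRestrict ⁻¹' (S.domRestrict '' M) := by
    ext w
    simp only [mem_ofPred_eq, mem_preimage, mem_image, domRestrict_eq_domRestrict_iff]
  rw [heq]
  exact (hM.image hrestrict).isClosed.preimage hrestrict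

end GenericPoints

/-! ### Configuration spaces -/

section ConfigSpace

variable {ι κ V W W' X : Type*} [AddMonoid V] [AddMonoid W] [AddMonoid W'] [AddAction V X]
  [TopologicalSpace X]

/-- The space of configurations of a `V`-space `X` along the homomorphisms `F i : W →+ V`: the
closure in `ι → X` of the set of all `(F i w +ᵥ x)ᵢ`. Face cubes, arithmetic progressions and
arrangements of cubes are all configuration spaces, for different choices of `F`. -/
def configSpace (X : Type*) [AddAction V X] [TopologicalSpace X] (F : ι → W →+ V) : Set (ι → X) :=
  closure (range fun p : W × X => fun i => F i p.1 +ᵥ p.2)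

theorem isClosed_configSpace (F : ι → W →+ V) : IsClosed (configSpace X F) :=
  isClosed_closure

theorem vadd_mem_configSpace (F : ι → W →+ V) (w : W) (x : X) :
    (fun i => F i w +ᵥ x) ∈ configSpace X F :=
  subset_closure ⟨(w, x), rfl⟩

theorem const_mem_configSpace (F : ι → W →+ V) (x : X) : (fun _ => x) ∈ configSpace X F := by
  simpa only [map_zero, zero_vadd] using vadd_mem_configSpace F 0 x

theorem configSpace_subset {F : ι → W →+ V} {K : Set (ι → X)} (hK : IsClosed K)
    (h : ∀ w x, (fun i => F i w +ᵥ x) ∈ K) : configSpace X F ⊆ K :=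
  closure_minimal (range_subset_iff.2 fun p => h p.1 p.2) hK

theorem apply_eq_apply_of_mem_configSpace [T2Space X] {F : ι → W →+ V} {i j : ι} (h : F i = F j)
    {m : ι → X} (hm : m ∈ configSpace X F) : m i = m j :=
  configSpace_subset (K := {m | m i = m j})
    (isClosed_eq (continuous_apply i) (continuous_apply j)) (fun w x => by
      simp only [mem_ofPred_eq, h]) hm

theorem eventually_residual_mem_closure_orbit [Countable ι] [SecondCountableTopology X]
    [ContinuousConstVAdd V X] {F : ι → W →+ V} {o : ι} (ho : F o = 0) :
    ∀ᶠ x in residual X, ∀ m ∈ configSpace X F, m o = x →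
      m ∈ closure (range fun w i => F i w +ᵥ x) := by
  filter_upwards [eventually_residual_mem_closure_range (X := X) (g := fun w x i => F i w +ᵥ x)
    fun w => by fun_prop] with x hx m hm hmo
  refine hx m (hmo ▸ map_mem_closure (f := fun m : ι → X => (m o, m)) (by fun_prop) hm ?_)
  rintro _ ⟨⟨w, y⟩, rfl⟩
  exact ⟨(w, y), by simp only [ho, AddMonoidHom.zero_apply, zero_vadd]⟩

instance [CompactSpace X] (F : ι → W →+ V) : CompactSpace (configSpace X F) :=
  isCompact_iff_compactSpace.1 (isClosed_configSpace F).isCompact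

theorem comp_mem_configSpace {F : ι → W →+ V} {F' : κ → W' →+ V} {j : κ → ι}
    (h : ∀ w, ∃ w' g, ∀ k, F (j k) w = F' k w' + g) {m : ι → X} (hm : m ∈ configSpace X F) :
    m ∘ j ∈ configSpace X F' := by
  refine configSpace_subset (K := (· ∘ j) ⁻¹' configSpace X F')
    ((isClosed_configSpace F').preimage (by fun_prop)) (fun w x => ?_) hm
  obtain ⟨w', g, hw⟩ := h w
  have hconfig : (fun i => F i w +ᵥ x) ∘ j = fun k => F' k w' +ᵥ g +ᵥ x := by
    funext k
    rw [Function.comp_apply, hw, add_vadd]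
  rw [mem_preimage, hconfig]
  exact vadd_mem_configSpace F' w' (g +ᵥ x)

theorem exists_comp_eq_of_mem_configSpace [CompactSpace X] [T2Space X] {F : ι → W →+ V}
    {F' : κ → W' →+ V} {j : κ → ι} (h : ∀ w', ∃ w, ∀ k, F (j k) w = F' k w') {n : κ → X}
    (hn : n ∈ configSpace X F') : ∃ m ∈ configSpace X F, m ∘ j = n := by
  refine configSpace_subset (K := (· ∘ j) '' configSpace X F)
    ((isClosed_configSpace F).isCompact.image (by fun_prop)).isClosed (fun w' x => ?_) hn
  obtain ⟨w, hw⟩ := h w'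
  exact ⟨_, vadd_mem_configSpace F w x, funext fun k => congrArg (· +ᵥ x) (hw k)⟩

/-- Restriction of a configuration to the positions in `S`. -/
def configRestrict (F : ι → W →+ V) (S : Set ι) (m : configSpace X F) :
    configSpace X fun i : S => F i :=
  ⟨(m : ι → X) ∘ (↑), comp_mem_configSpace (fun w => ⟨w, 0, fun _ => (add_zero _).symm⟩) m.2⟩

theorem continuous_configRestrict (F : ι → W →+ V) (S : Set ι) :
    Continuous (configRestrict (X := X) F S) :=
  Continuous.subtype_mk ((Pi.continuous_precomp _).comp continuous_subtype_val) _

/-- A configuration is generic if it is a point of openness of all restriction maps. It can then be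
perturbed along with any configuration sharing some of its positions, keeping those shared. -/
def IsGenericConfig {F : ι → W →+ V} (m : configSpace X F) : Prop :=
  ∀ S, 𝓝 (configRestrict F S m) ≤ map (configRestrict F S) (𝓝 m)

theorem IsGenericConfig.mem_closure_vadd_eqOn {F : ι → W →+ V} {m n : configSpace X F}
    (hm : IsGenericConfig m) {S : Set ι} (hmn : EqOn (m : ι → X) n S) :
    ((m : ι → X), (n : ι → X)) ∈ closure
      {p | p.1 ∈ configSpace X F ∧ (∃ w x, p.2 = fun i => F i w +ᵥ x) ∧ EqOn p.1 p.2 S} := by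
  have hdense : n ∈ closure {n : configSpace X F | ∃ w x, (n : ι → X) = fun i => F i w +ᵥ x} := by
    refine closure_subtype.2 (closure_mono ?_ n.2)
    rintro _ ⟨⟨w, x⟩, rfl⟩
    exact ⟨⟨_, vadd_mem_configSpace F w x⟩, ⟨w, x, rfl⟩, rfl⟩
  have hfiber := mem_closure_fiberProduct (hm S) (continuous_configRestrict F S).continuousAt
    (Subtype.ext (funext fun i => hmn i.2)) hdense
  refine map_mem_closure (f := Prod.map Subtype.val Subtype.val)
    (continuous_subtype_val.prodMap continuous_subtype_val) hfiber ?_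
  rintro ⟨m', n'⟩ ⟨hn', heq⟩
  exact ⟨m'.2, hn', fun i hi => congrFun (congrArg Subtype.val heq) ⟨i, hi⟩⟩

variable [ContinuousConstVAdd V X]

theorem pi_vadd_mem_configSpace {F : ι → W →+ V} (w : W) {m : ι → X}
    (hm : m ∈ configSpace X F) : (fun i => F i w +ᵥ m i) ∈ configSpace X F := by
  refine configSpace_subset (K := (fun m i => F i w +ᵥ m i) ⁻¹' configSpace X F)
    ((isClosed_configSpace F).preimage (by fun_prop)) (fun w' x => ?_) hm
  simpa only [mem_preimage, ← add_vadd, ← map_add] using vadd_mem_configSpace F (w + w') x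

instance (F : ι → W →+ V) : AddAction W (configSpace X F) where
  vadd w m := ⟨fun i => F i w +ᵥ (m : ι → X) i, pi_vadd_mem_configSpace w m.2⟩
  zero_vadd m := Subtype.ext <| funext fun i => by
    change F i 0 +ᵥ _ = _
    rw [map_zero, zero_vadd]
  add_vadd w w' m := Subtype.ext <| funext fun i => by
    change F i (w + w') +ᵥ _ = F i w +ᵥ F i w' +ᵥ _
    rw [map_add, add_vadd]

instance (F : ι → W →+ V) : ContinuousConstVAdd W (configSpace X F) where
  continuous_const_vadd w := Continuous.subtype_mk
    (continuous_pi fun i => ((continuous_apply i).comp continuous_subtype_val).const_vadd (F i w)) _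

theorem configSpace_eq_closure_orbit [AddAction.IsMinimal V X] {F : ι → W →+ V} {e : V → W}
    (he : ∀ i g, F i (e g) = g) (x : X) :
    configSpace X F = closure (range fun w i => F i w +ᵥ x) := by
  refine (configSpace_subset isClosed_closure fun w y => ?_).antisymm
    (closure_mono (range_subset_iff.2 fun w => ⟨(w, x), rfl⟩))
  have hclosed : IsClosed {y : X | (fun i => F i w +ᵥ y) ∈ closure (range fun w i => F i w +ᵥ x)} :=
    isClosed_closure.preimage (by fun_prop)
  have horbit (g : V) : (fun i => F i w +ᵥ g +ᵥ x) ∈ range fun w i => F i w +ᵥ x :=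
    ⟨w + e g, funext fun i => by simp only [map_add, he, add_vadd]⟩
  have hrange : range (fun g : V => g +ᵥ x) ⊆
      {y : X | (fun i => F i w +ᵥ y) ∈ closure (range fun w i => F i w +ᵥ x)} :=
    range_subset_iff.2 fun g => subset_closure (horbit g)
  exact closure_minimal hrange hclosed (denseRange_vadd V x y)

variable [CompactSpace X] [T2Space X]

theorem mem_closure_orbit_of_mem_configSpace [AddAction.IsMinimal V X] {F : ι → W →+ V}
    {e : V → W} (he : ∀ i g, F i (e g) = g) {m n : ι → X} (hm : m ∈ configSpace X F)
    (hn : n ∈ configSpace X F) : n ∈ closure (range fun w i => F i w +ᵥ m i) := by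
  obtain hι | ⟨⟨i₀⟩⟩ := isEmpty_or_nonempty ι
  · exact subset_closure ⟨0, Subsingleton.elim _ _⟩
  have hreturn : (fun _ => m i₀) ∈ closure (range fun w i => F i w +ᵥ m i) :=
    const_mem_closure_range_vadd_of_section F e he (configSpace_eq_closure_orbit he (m i₀) ▸ hm)
  have hinv (w : W) : MapsTo (fun n i => F i w +ᵥ n i)
      (closure (range fun w i => F i w +ᵥ m i)) (closure (range fun w i => F i w +ᵥ m i)) := by
    refine MapsTo.closure ?_ (by fun_prop)
    rintro _ ⟨w', rfl⟩
    exact ⟨w + w', funext fun i => by simp only [map_add, add_vadd]⟩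
  rw [configSpace_eq_closure_orbit he (m i₀)] at hn
  exact closure_minimal (range_subset_iff.2 fun w => hinv w hreturn) isClosed_closure hn

theorem isMinimal_configSpace [AddAction.IsMinimal V X] {F : ι → W →+ V} {e : V → W}
    (he : ∀ i g, F i (e g) = g) : AddAction.IsMinimal W (configSpace X F) where
  dense_orbit m n := by
    rw [closure_subtype, AddAction.orbit, ← range_comp]
    exact mem_closure_orbit_of_mem_configSpace he m.2 n.2

end ConfigSpace

section ConfigSpaceFactors

variable {ι V W X : Type*} [AddGroup V] [AddGroup W] [AddAction V X] [TopologicalSpace X]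
  [CompactSpace X] [T2Space X] [ContinuousConstVAdd V X] [AddAction.IsMinimal V X]

theorem semiOpen_eval_configSpace {F : ι → W →+ V} {e : V → W} (he : ∀ i g, F i (e g) = g)
    (o : ι) : SemiOpen fun m : configSpace X F => (m : ι → X) o := by
  have := isMinimal_configSpace (X := X) he
  let : AddAction W X := AddAction.compHom X (F o)
  have : ContinuousConstVAdd W X := ⟨fun w => continuous_const_vadd (F o w)⟩
  exact semiOpen_of_isMinimal W ((continuous_apply o).comp continuous_subtype_val)
    (fun x => ⟨⟨_, const_mem_configSpace F x⟩, rfl⟩) fun _ _ => rfl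

theorem semiOpen_configRestrict {F : ι → W →+ V} {e : V → W} (he : ∀ i g, F i (e g) = g)
    (S : Set ι) : SemiOpen (configRestrict (X := X) F S) := by
  have := isMinimal_configSpace (X := X) he
  refine semiOpen_of_isMinimal W (continuous_configRestrict F S) (fun n => ?_) fun _ _ => rfl
  obtain ⟨m, hm, hmn⟩ := exists_comp_eq_of_mem_configSpace (F := F) (j := ((↑) : S → ι))
    (fun w => ⟨w, fun _ => rfl⟩) n.2
  exact ⟨⟨m, hm⟩, Subtype.ext hmn⟩

theorem eventually_residual_dense_isGenericConfig [Finite ι] [SecondCountableTopology X]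
    {F : ι → W →+ V} {e : V → W} (he : ∀ i g, F i (e g) = g) (o : ι) :
    ∀ᶠ x in residual X, Dense ((↑) ⁻¹' {m : configSpace X F | IsGenericConfig m} :
      Set ((fun m : configSpace X F => (m : ι → X) o) ⁻¹' {x})) :=
  eventually_residual_dense_fiber ((continuous_apply o).comp continuous_subtype_val)
    (semiOpen_eval_configSpace he o) <| eventually_countable_forall.2 fun S =>
      eventually_residual_nhds_le_map (continuous_configRestrict F S) (semiOpen_configRestrict he S)

end ConfigSpaceFactors

/-! ### Cubes -/

section CubeSpace

attribute [local instance] Ultrafilter.add Ultrafilter.addSemigroup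

variable {ι V X : Type*} [AddCommMonoid V]

/-- The form `t ↦ ∑ j ∈ ε, t j` attached to the vertex `ε` of the cube with edges indexed by `ι`;
vertices are encoded as finite sets of edge directions. -/
def cubeForm (ε : Finset ι) : (ι → V) →+ V :=
  ∑ j ∈ ε, Pi.evalAddMonoidHom (fun _ => V) j

theorem cubeForm_apply (ε : Finset ι) (t : ι → V) : cubeForm ε t = ∑ j ∈ ε, t j := by
  simp only [cubeForm, AddMonoidHom.finsetSum_apply, Pi.evalAddMonoidHom_apply]

theorem cubeForm_empty : (cubeForm ∅ : (ι → V) →+ V) = 0 :=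
  Finset.sum_empty

theorem cubeForm_single [DecidableEq ι] (ε : Finset ι) (j : ι) (g : V) :
    cubeForm ε (Pi.single j g) = if j ∈ ε then g else 0 := by
  rw [cubeForm_apply, Finset.sum_pi_single']

theorem exists_ultrafilter_map_cubeForm [DecidableEq ι] {u : Ultrafilter V} (hu : u + u = u)
    (s : Finset ι) : ∃ U : Ultrafilter (ι → V), ∀ ε : Finset ι,
      U.map (cubeForm ε) = if Disjoint s ε then pure 0 else u := by
  induction s using Finset.induction_on with
  | empty => exact ⟨pure 0, fun ε => by simp⟩
  | insert j s _ ih =>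
    obtain ⟨U, hU⟩ := ih
    refine ⟨u.map (Pi.single j) + U, fun ε => ?_⟩
    have hedge : (u.map (Pi.single j)).map (cubeForm ε) = if j ∈ ε then u else pure 0 := by
      rw [Ultrafilter.map_map, (funext (cubeForm_single ε j) : cubeForm ε ∘ Pi.single j = _)]
      split_ifs
      · exact Ultrafilter.map_id u
      · exact ultrafilter_map_const u 0
    rw [ultrafilter_map_add, hedge, hU]
    by_cases hj : j ∈ ε <;> by_cases hs : Disjoint s ε <;>
      simp [hj, hs, hu, ultrafilter_pure_zero_add, ultrafilter_add_pure_zero]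

variable [AddAction V X] [TopologicalSpace X]

/-- Two points are related along `ι`-cubes if the same remaining vertices complete both of them to
points of the cube space. Regionally proximal points of order `d` are related along `d`-cubes. -/
def CubeRelated (V ι : Type*) [AddCommMonoid V] [AddAction V X] [DecidableEq ι] (x y : X) : Prop :=
  ∃ c : Finset ι → X, c ∈ configSpace X (cubeForm (V := V)) ∧ c ∅ = x ∧
    Function.update c ∅ y ∈ configSpace X (cubeForm (V := V))

theorem cubeRelated_refl [DecidableEq ι] (x : X) : CubeRelated V ι x x :=
  ⟨fun _ => x, const_mem_configSpace _ x, rfl, by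
    rw [Function.update_eq_self]
    exact const_mem_configSpace _ x⟩

theorem update_mem_cubeSpace_of_mem_closure_orbit [ContinuousConstVAdd V X] [DecidableEq ι]
    {c c' : Finset ι → X} {y : X}
    (hc : Function.update c ∅ y ∈ configSpace X (cubeForm (V := V)))
    (hc' : c' ∈ closure (range fun (t : ι → V) ε => cubeForm ε t +ᵥ c ε)) :
    Function.update c' ∅ y ∈ configSpace X (cubeForm (V := V)) := by
  have hupdate : Continuous fun c : Finset ι → X => Function.update c ∅ y :=
    continuous_id.update ∅ continuous_const
  refine closure_minimal (range_subset_iff.2 fun t => ?_)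
    ((isClosed_configSpace (cubeForm (V := V))).preimage hupdate) hc'
  have hvadd : (fun ε => cubeForm ε t +ᵥ Function.update c ∅ y ε) =
      Function.update (fun ε => cubeForm ε t +ᵥ c ε) ∅ y := by
    funext ε
    rw [Function.apply_update fun ε (x : X) => cubeForm ε t +ᵥ x, cubeForm_empty,
      AddMonoidHom.zero_apply, zero_vadd]
  rw [mem_preimage, ← hvadd]
  exact pi_vadd_mem_configSpace t hc

theorem const_mem_closure_range_cubeForm_vadd [Finite ι] [CompactSpace X] [T2Space X]
    [ContinuousConstVAdd V X] [AddAction.IsMinimal V X] {x : X} {c : Finset ι → X}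
    (hc : c ∈ closure (range fun (t : ι → V) ε => cubeForm ε t +ᵥ x)) :
    (fun _ => x) ∈ closure (range fun (t : ι → V) ε => cubeForm ε t +ᵥ c ε) := by
  classical
  have := Fintype.ofFinite ι
  refine const_mem_closure_range_vadd (cubeForm (ι := ι) (V := V)) (fun u hu => ?_) hc
  obtain ⟨U, hU⟩ := exists_ultrafilter_map_cubeForm hu (Finset.univ : Finset ι)
  refine ⟨U, fun ε => ?_⟩
  obtain rfl | ⟨j, hj⟩ := ε.eq_empty_or_nonempty
  · exact .inl cubeForm_empty
  · exact .inr (by rw [hU, if_neg (Finset.not_disjoint_iff.2 ⟨j, Finset.mem_univ j, hj⟩)])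

theorem eventually_residual_update_mem_cubeSpace [Finite ι] [DecidableEq ι] [CompactSpace X]
    [T2Space X] [SecondCountableTopology X] [ContinuousConstVAdd V X] [AddAction.IsMinimal V X] :
    ∀ᶠ x in residual X, ∀ y, CubeRelated V ι x y → ∀ c ∈ configSpace X (cubeForm (V := V)),
      c (∅ : Finset ι) = x → Function.update c ∅ y ∈ configSpace X (cubeForm (V := V)) := by
  filter_upwards [eventually_residual_mem_closure_orbit (X := X)
    (cubeForm_empty (ι := ι) (V := V))] with x hx y ⟨c₀, hc₀, hc₀x, hc₀y⟩ c hc hcx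
  have hreturn := const_mem_closure_range_cubeForm_vadd (hx c₀ hc₀ hc₀x)
  exact update_mem_cubeSpace_of_mem_closure_orbit
    (update_mem_cubeSpace_of_mem_closure_orbit hc₀y hreturn) (hx c hc hcx)

end CubeSpace

/-! ### From cubes to other configurations -/

section BoxSpace

variable {ι P V X : Type*} [AddCommGroup P] [AddCommGroup V]

/-- The forms obtained from the family `F` by translating the parameter along cubes with edges
`e j`: position `i` of the copy of `F` at the vertex `ε`. -/
def boxForm (F : Option ι → P →+ V) (e : ι → V →+ P) (q : Option ι × Finset ι) :
    P × (ι → V) →+ V :=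
  (F q.1).comp (AddMonoidHom.fst P (ι → V) +
    (∑ j ∈ q.2, (e j).comp (Pi.evalAddMonoidHom _ j)).comp (AddMonoidHom.snd P (ι → V)))

/-- The positions at which a replacement at `(none, ∅)` is under control once the directions in `A`
have been treated: position `none` and those in `A`, at the vertices that avoid `A`. -/
def settledPositions (A : Finset ι) : Set (Option ι × Finset ι) :=
  {q | (∀ j ∈ q.1, j ∈ A) ∧ Disjoint q.2 A}

theorem mem_settledPositions_of_insert [DecidableEq ι] {A : Finset ι} {k : ι}
    {q : Option ι × Finset ι} (hq : q ∈ settledPositions (insert k A)) (hk : q.1 ≠ some k) :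
    q ∈ settledPositions A :=
  ⟨fun j hj => (Finset.mem_insert.1 (hq.1 j hj)).resolve_left fun h => hk (h ▸ hj),
    (Finset.disjoint_insert_right.1 hq.2).2⟩

variable {F : Option ι → P →+ V} {e : ι → V →+ P}

theorem boxForm_apply (q : Option ι × Finset ι) (w : P × (ι → V)) :
    boxForm F e q w = F q.1 (w.1 + ∑ j ∈ q.2, e j (w.2 j)) := by
  simp [boxForm, AddMonoidHom.finsetSum_apply]

theorem boxForm_zero_right (q : Option ι × Finset ι) (v : P) : boxForm F e q (v, 0) = F q.1 v := by
  simp [boxForm_apply]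

theorem boxForm_none (h₀ : ∀ j t, F none (e j t) = t) (ε : Finset ι) (w : P × (ι → V)) :
    boxForm F e (none, ε) w = cubeForm ε w.2 + F none w.1 := by
  simp only [boxForm_apply, cubeForm_apply, map_add, map_sum, h₀, add_comm]

variable [AddAction V X] [TopologicalSpace X]

theorem boxSpace_comp_none (h₀ : ∀ j t, F none (e j t) = t) {m : Option ι × Finset ι → X}
    (hm : m ∈ configSpace X (boxForm F e)) :
    (fun ε => m (none, ε)) ∈ configSpace X (cubeForm (V := V)) :=
  comp_mem_configSpace (j := Prod.mk none) (fun w => ⟨w.2, _, fun ε => boxForm_none h₀ ε w⟩) hm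

theorem boxSpace_comp_empty {m : Option ι × Finset ι → X} (hm : m ∈ configSpace X (boxForm F e)) :
    (fun i => m (i, ∅)) ∈ configSpace X F :=
  comp_mem_configSpace (j := fun i => (i, ∅)) (fun w => ⟨w.1, 0, fun i => by
    simp only [boxForm_apply, Finset.sum_empty, add_zero]⟩) hm

variable [DecidableEq ι]

theorem boxForm_insert (q : Option ι × Finset ι) (k : ι) (w : P × (ι → V)) :
    boxForm F e (q.1, insert k q.2) w =
      boxForm F e q (w.1 + e k (w.2 k), Function.update w.2 k 0) := by
  have hsum : ∑ j ∈ q.2, e j (Function.update w.2 k 0 j) = ∑ j ∈ q.2.erase k, e j (w.2 j) := by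
    rw [← Finset.sum_erase q.2 (a := k) (by simp)]
    exact Finset.sum_congr rfl fun j hj => by
      rw [Function.update_of_ne (Finset.ne_of_mem_erase hj)]
  rw [boxForm_apply, boxForm_apply, hsum, add_assoc, ← Finset.erase_insert_eq_erase,
    Finset.add_sum_erase _ (fun j => e j (w.2 j)) (Finset.mem_insert_self k q.2)]

theorem boxForm_some_insert (he : ∀ j t, F (some j) (e j t) = 0) (k : ι) (ε : Finset ι) :
    boxForm F e (some k, insert k ε) = boxForm F e (some k, ε) := by
  by_cases hk : k ∈ ε
  · rw [Finset.insert_eq_of_mem hk]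
  · ext1 w
    simp [boxForm_apply, Finset.sum_insert hk, he]

theorem boxSpace_comp_insert {m : Option ι × Finset ι → X} (hm : m ∈ configSpace X (boxForm F e))
    (k : ι) : (fun q => m (q.1, insert k q.2)) ∈ configSpace X (boxForm F e) :=
  comp_mem_configSpace (j := fun q : Option ι × Finset ι => (q.1, insert k q.2))
    (fun w => ⟨_, 0, fun q => by rw [boxForm_insert, add_zero]⟩) hm

theorem exists_eqOn_settledPositions_empty [CompactSpace X] [T2Space X]
    (h₀ : ∀ j t, F none (e j t) = t) {m : Option ι × Finset ι → X} {y : X}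
    (hy : Function.update (fun ε => m (none, ε)) ∅ y ∈ configSpace X (cubeForm (V := V))) :
    ∃ n ∈ configSpace X (boxForm F e),
      EqOn n (Function.update m (none, ∅) y) (settledPositions ∅) := by
  obtain ⟨n, hn, hny⟩ := exists_comp_eq_of_mem_configSpace (F := boxForm F e) (j := Prod.mk none)
    (fun t => ⟨(0, t), fun ε => by rw [boxForm_none h₀, map_zero, add_zero]⟩) hy
  refine ⟨n, hn, ?_⟩
  rintro ⟨_ | i, ε⟩ ⟨hi, -⟩
  · exact congrFun
      (hny.trans (Function.update_comp_eq_of_injective m (Prod.mk_right_injective none) ∅ y).symm) ε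
  · exact absurd (hi i rfl) (Finset.notMem_empty i)

variable [ContinuousConstVAdd V X]

/-- The witness is the face of `m` in direction `k` translated by `-e k t`, where `t` is the
`k`-th edge parameter of `c`; this translation does not move position `some k`. -/
theorem exists_eqOn_settledPositions_insert_of_eqOn_vadd (he : ∀ j t, F (some j) (e j t) = 0)
    {A : Finset ι} {k : ι} (hk : k ∉ A) {m c : Option ι × Finset ι → X}
    (hm : m ∈ configSpace X (boxForm F e))
    (hc : ∃ w x, c = fun q => boxForm F e q w +ᵥ x)
    (hmc : EqOn m c {q ∈ settledPositions A | k ∈ q.2}) :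
    ∃ n ∈ configSpace X (boxForm F e),
      EqOn n (fun q => if q.1 = some k then m (q.1, insert k q.2) else c q)
        (settledPositions (insert k A)) := by
  obtain ⟨w, x, rfl⟩ := hc
  refine ⟨_, boxSpace_comp_insert (pi_vadd_mem_configSpace (-e k (w.2 k), 0) hm) k, ?_⟩
  rintro ⟨i, ε⟩ hq
  simp only [boxForm_zero_right]
  split_ifs with hik
  · rw [show i = some k from hik, map_neg, he, neg_zero, zero_vadd]
  · have hkε : k ∉ ε := (Finset.disjoint_insert_right.1 hq.2).1
    obtain ⟨hi, hε⟩ := mem_settledPositions_of_insert hq hik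
    have hmem : (i, insert k ε) ∈ {q ∈ settledPositions A | k ∈ q.2} :=
      ⟨⟨hi, Finset.disjoint_insert_left.2 ⟨hk, hε⟩⟩, Finset.mem_insert_self k ε⟩
    rw [hmc hmem, ← add_vadd, boxForm_apply, boxForm_apply, ← map_add, Finset.sum_insert hkε]
    congr 2
    abel

variable [CompactSpace X] [T2Space X]

theorem exists_eqOn_settledPositions_insert (he : ∀ j t, F (some j) (e j t) = 0)
    {A : Finset ι} {k : ι} (hk : k ∉ A) {m : configSpace X (boxForm F e)} (hm : IsGenericConfig m)
    {y : X} (hA : ∃ n ∈ configSpace X (boxForm F e),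
      EqOn n (Function.update (m : Option ι × Finset ι → X) (none, ∅) y) (settledPositions A)) :
    ∃ n ∈ configSpace X (boxForm F e),
      EqOn n (Function.update (m : Option ι × Finset ι → X) (none, ∅) y)
        (settledPositions (insert k A)) := by
  obtain ⟨n, hn, hnm⟩ := hA
  have hmn : EqOn (m : Option ι × Finset ι → X) n {q ∈ settledPositions A | k ∈ q.2} :=
    fun q hq => by
      rw [hnm hq.1, Function.update_of_ne]
      rintro rfl
      exact Finset.notMem_empty k hq.2
  have hcont : Continuous fun (p : (Option ι × Finset ι → X) × (Option ι × Finset ι → X)) q =>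
      if q.1 = some k then p.1 (q.1, insert k q.2) else p.2 q :=
    continuous_pi fun q => by split_ifs <;> fun_prop
  obtain ⟨n', hn', hn'eq⟩ := closure_minimal
    (fun p hp => exists_eqOn_settledPositions_insert_of_eqOn_vadd he hk hp.1 hp.2.1 hp.2.2)
    ((isClosed_setOf_exists_eqOn (isClosed_configSpace (boxForm F e)).isCompact
      (settledPositions (insert k A))).preimage hcont)
    (hm.mem_closure_vadd_eqOn (n := ⟨n, hn⟩) hmn)
  refine ⟨n', hn', hn'eq.trans ?_⟩
  rintro ⟨i, ε⟩ hq
  dsimp only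
  split_ifs with hik
  · subst hik
    rw [Function.update_of_ne (by simp)]
    exact apply_eq_apply_of_mem_configSpace (boxForm_some_insert he k ε) m.2
  · exact hnm (mem_settledPositions_of_insert hq hik)

theorem IsGenericConfig.update_mem_configSpace [Finite ι] (h₀ : ∀ j t, F none (e j t) = t)
    (he : ∀ j t, F (some j) (e j t) = 0) {m : configSpace X (boxForm F e)}
    (hm : IsGenericConfig m) {y : X}
    (hy : Function.update (fun ε => (m : Option ι × Finset ι → X) (none, ε)) ∅ y ∈
      configSpace X (cubeForm (V := V))) :
    Function.update (fun i => (m : Option ι × Finset ι → X) (i, ∅)) none y ∈ configSpace X F := by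
  have := Fintype.ofFinite ι
  have hsettled (A : Finset ι) : ∃ n ∈ configSpace X (boxForm F e),
      EqOn n (Function.update (m : Option ι × Finset ι → X) (none, ∅) y) (settledPositions A) := by
    induction A using Finset.induction_on with
    | empty => exact exists_eqOn_settledPositions_empty h₀ hy
    | insert k A hk ih => exact exists_eqOn_settledPositions_insert he hk hm ih
  obtain ⟨n, hn, hnm⟩ := hsettled Finset.univ
  convert boxSpace_comp_empty hn using 1
  funext i
  rw [hnm ⟨fun j _ => Finset.mem_univ j, Finset.disjoint_empty_left _⟩]
  exact congrFun (Function.update_comp_eq_of_injective (m : Option ι × Finset ι → X)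
    (Prod.mk_left_injective ∅) none y).symm i

theorem eventually_residual_update_mem_configSpace [Finite ι] [SecondCountableTopology X]
    [AddAction.IsMinimal V X] {s : V → P} (hs : ∀ i g, F i (s g) = g)
    (h₀ : ∀ j t, F none (e j t) = t) (he : ∀ j t, F (some j) (e j t) = 0) :
    ∀ᶠ x in residual X, ∀ y, CubeRelated V ι x y → ∀ n ∈ configSpace X F, n none = x →
      Function.update n none y ∈ configSpace X F := by
  filter_upwards [eventually_residual_update_mem_cubeSpace (ι := ι) (V := V) (X := X),
    eventually_residual_dense_isGenericConfig (X := X) (F := boxForm F e) (e := fun g => (s g, 0))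
      (fun q g => by rw [boxForm_zero_right, hs]) (none, ∅)] with x hcube hgen y hxy n hn hnx
  obtain ⟨m, hm, rfl⟩ := exists_comp_eq_of_mem_configSpace (F := boxForm F e)
    (j := fun i => (i, ∅)) (fun v => ⟨(v, 0), fun i => boxForm_zero_right _ v⟩) hn
  have hcont : Continuous fun m : (fun m : configSpace X (boxForm F e) =>
      (m : Option ι × Finset ι → X) (none, ∅)) ⁻¹' {x} =>
      Function.update (fun i => (m : Option ι × Finset ι → X) (i, ∅)) none y :=
    (continuous_pi fun i => ((continuous_apply (i, ∅)).comp continuous_subtype_val).comp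
      continuous_subtype_val).update none continuous_const
  exact closure_minimal (fun m' hm' => IsGenericConfig.update_mem_configSpace h₀ he hm'
    (hcube y hxy _ (boxSpace_comp_none h₀ m'.1.2) m'.2))
    ((isClosed_configSpace F).preimage hcont) (hgen ⟨⟨m, hm⟩, hnx⟩)

end BoxSpace

/-! ### Progressions -/

section Slopes

variable {ι κ K V X : Type*} [DivisionRing K] [AddCommGroup V] [Module K V]

/-- The form `(p, t) ↦ p + a i • t`; its configurations are the translated progressions with
slopes `a i`. -/
def slopeForm (a : κ → K) (i : κ) : V × V →+ V :=
  AddMonoidHom.fst V V + (DistribSMul.toAddMonoidHom V (a i)).comp (AddMonoidHom.snd V V)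

theorem slopeForm_apply (a : κ → K) (i : κ) (v : V × V) : slopeForm a i v = v.1 + a i • v.2 :=
  rfl

/-- The parameter direction along which position `none` moves with unit speed and position `some j`
stays fixed. -/
def slopeEdge (a : Option ι → K) (j : ι) : V →+ V × V :=
  ((-DistribSMul.toAddMonoidHom V (a (some j))).prod (AddMonoidHom.id V)).comp
    (DistribSMul.toAddMonoidHom V (a none - a (some j))⁻¹)

theorem slopeForm_some_slopeEdge (a : Option ι → K) (j : ι) (t : V) :
    slopeForm a (some j) (slopeEdge a j t) = 0 :=
  neg_add_cancel _

theorem slopeForm_none_slopeEdge {a : Option ι → K} (ha : Function.Injective a) (j : ι) (t : V) :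
    slopeForm a none (slopeEdge a j t) = t := by
  have hne : a none - a (some j) ≠ 0 := sub_ne_zero.2 (ha.ne (by simp))
  change -(a (some j) • (a none - a (some j))⁻¹ • t) + a none • (a none - a (some j))⁻¹ • t = t
  rw [neg_add_eq_sub, ← sub_smul, smul_inv_smul₀ hne]

variable [AddAction V X] [TopologicalSpace X] [CompactSpace X] [T2Space X]
  [SecondCountableTopology X] [ContinuousConstVAdd V X] [AddAction.IsMinimal V X]
  [Finite ι] [DecidableEq ι]

theorem eventually_residual_update_mem_slopeSpace {a : Option ι → K} (ha : Function.Injective a)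
    (o : Option ι) : ∀ᶠ x in residual X, ∀ y, CubeRelated V ι x y →
      ∀ n ∈ configSpace X (slopeForm (V := V) a), n o = x →
        Function.update n o y ∈ configSpace X (slopeForm (V := V) a) := by
  have hswap : Function.Injective (a ∘ Equiv.swap none o) := ha.comp (Equiv.injective _)
  filter_upwards [eventually_residual_update_mem_configSpace (X := X)
    (F := slopeForm (V := V) (a ∘ Equiv.swap none o)) (s := fun g => (g, 0))
    (fun i g => by rw [slopeForm_apply, smul_zero, add_zero])
    (slopeForm_none_slopeEdge hswap) (slopeForm_some_slopeEdge _)] with x hx y hxy n hn hno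
  have hn' : n ∘ Equiv.swap none o ∈
      configSpace X (slopeForm (V := V) (a ∘ Equiv.swap none o)) :=
    comp_mem_configSpace (fun w => ⟨w, 0, fun _ => (add_zero _).symm⟩) hn
  have hupdate := comp_mem_configSpace (F' := slopeForm (V := V) a) (j := Equiv.swap none o)
    (fun w => ⟨w, 0, fun i => by
      simp only [slopeForm_apply, Function.comp_apply, Equiv.swap_apply_self, add_zero]⟩)
    (hx y hxy _ hn' (by simpa using hno))
  rwa [Function.update_comp_equiv, Equiv.symm_swap, Equiv.swap_apply_left, Function.comp_assoc,
    ← Equiv.coe_trans, Equiv.swap_swap] at hupdate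

theorem eventually_residual_mem_slopeSpace {a : Option ι → K} (ha : Function.Injective a) :
    ∀ᶠ x in residual X, ∀ f : Option ι → X, (∀ o, CubeRelated V ι x (f o)) →
      f ∈ configSpace X (slopeForm (V := V) a) := by
  filter_upwards [eventually_countable_forall.2 fun o =>
    eventually_residual_update_mem_slopeSpace (X := X) (V := V) ha o] with x hx f hf
  have hpartial (s : Finset (Option ι)) :
      s.piecewise f (fun _ => x) ∈ configSpace X (slopeForm (V := V) a) := by
    induction s using Finset.induction_on with
    | empty =>
      rw [Finset.piecewise_empty]
      exact const_mem_configSpace _ x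
    | insert o s ho ih =>
      rw [Finset.piecewise_insert]
      exact hx o _ (hf o) _ ih (Finset.piecewise_eq_of_notMem _ _ _ ho)
  have := Fintype.ofFinite ι
  simpa only [Finset.piecewise_univ] using hpartial Finset.univ

theorem eventually_residual_mem_closure_range_smul_vadd {α : ι → K} (hα : Function.Injective α)
    (hα₀ : ∀ i, α i ≠ 0) : ∀ᶠ x in residual X, ∀ f : ι → X, (∀ i, CubeRelated V ι x (f i)) →
      f ∈ closure (range fun (t : V) i => (α i • t) +ᵥ x) := by
  have ha : Function.Injective fun o : Option ι => o.elim 0 α := by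
    rintro (_ | i) (_ | j) h
    exacts [rfl, absurd h.symm (hα₀ j), absurd h (hα₀ i), congrArg some (hα h)]
  filter_upwards [eventually_residual_mem_slopeSpace (X := X) (V := V) ha,
    eventually_residual_mem_closure_orbit (X := X) (o := none)
      (F := fun o : Option ι => DistribSMul.toAddMonoidHom V (o.elim 0 α)) (by ext; simp)]
    with x hslope horbit f hf
  have hmem := comp_mem_configSpace (j := id)
    (F' := fun o : Option ι => DistribSMul.toAddMonoidHom V (o.elim 0 α))
    (fun w => ⟨w.2, w.1, fun o => add_comm _ _⟩)
    (hslope (fun o => o.elim x f) (Option.rec (cubeRelated_refl x) hf))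
  exact map_mem_closure (f := (· ∘ some)) (by fun_prop) (horbit _ hmem rfl)
    (by rintro _ ⟨t, rfl⟩; exact ⟨t, rfl⟩)

end Slopes

section RegionalProximality

theorem cubeRelated_of_forall_dist_lt {ι V X : Type*} [Countable ι] [DecidableEq ι]
    [AddCommMonoid V] [AddAction V X] [MetricSpace X] [CompactSpace X] {x y : X}
    (h : ∀ δ > 0, ∃ x' y' : X, dist x x' < δ ∧ dist y y' < δ ∧ ∃ t : ι → V,
      ∀ ε : Finset ι, ε.Nonempty → dist (cubeForm ε t +ᵥ x') (cubeForm ε t +ᵥ y') < δ) :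
    CubeRelated V ι x y := by
  choose x' y' hx' hy' t ht using fun n : ℕ => h (1 / (n + 1)) Nat.one_div_pos_of_nat
  obtain ⟨⟨c, c'⟩, -, θ, hθ, hlim⟩ := isCompact_univ.tendsto_subseq (X := _ × _) fun n =>
    mem_univ ((fun ε => cubeForm ε (t n) +ᵥ x' n), fun ε => cubeForm ε (t n) +ᵥ y' n)
  have hc (ε : Finset ι) : Tendsto (fun n => cubeForm ε (t (θ n)) +ᵥ x' (θ n)) atTop (𝓝 (c ε)) :=
    tendsto_pi_nhds.1 hlim.fst_nhds ε
  have hc' (ε : Finset ι) : Tendsto (fun n => cubeForm ε (t (θ n)) +ᵥ y' (θ n)) atTop (𝓝 (c' ε)) :=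
    tendsto_pi_nhds.1 hlim.snd_nhds ε
  have hzero : Tendsto (fun n => 1 / ((θ n : ℝ) + 1)) atTop (𝓝 0) :=
    tendsto_one_div_add_atTop_nhds_zero_nat.comp hθ.tendsto_atTop
  have hbase {z : X} {z' : ℕ → X} (hz : ∀ n : ℕ, dist z (z' n) < 1 / (n + 1)) :
      Tendsto (fun n => cubeForm (∅ : Finset ι) (t (θ n)) +ᵥ z' (θ n)) atTop (𝓝 z) := by
    simp only [cubeForm_empty, AddMonoidHom.zero_apply, zero_vadd]
    exact tendsto_iff_dist_tendsto_zero.2 <| squeeze_zero (fun _ => dist_nonneg)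
      (fun n => (dist_comm _ _).trans_le (hz (θ n)).le) hzero
  have hx : c ∅ = x := tendsto_nhds_unique (hc ∅) (hbase hx')
  have hy : c' ∅ = y := tendsto_nhds_unique (hc' ∅) (hbase hy')
  have heq (ε : Finset ι) (hε : ε ≠ ∅) : c' ε = c ε := by
    refine (dist_le_zero.1 (le_of_tendsto_of_tendsto ((hc ε).dist (hc' ε)) hzero ?_)).symm
    exact Eventually.of_forall fun n => (ht (θ n) ε (Finset.nonempty_iff_ne_empty.2 hε)).le
  refine ⟨c, ?_, hx, ?_⟩
  · exact mem_closure_of_tendsto hlim.fst_nhds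
      (Eventually.of_forall fun n => ⟨(t (θ n), x' (θ n)), rfl⟩)
  · rw [← Function.eq_update_iff.2 ⟨hy, heq⟩]
    exact mem_closure_of_tendsto hlim.snd_nhds
      (Eventually.of_forall fun n => ⟨(t (θ n), y' (θ n)), rfl⟩)

theorem cubeRelated_of_mem_RPdFlow {X : Type*} [MetricSpace X] [CompactSpace X] [AddAction ℝ X]
    {d : ℕ} {x y : X} (hxy : (x, y) ∈ RPdFlow (fun (t : ℝ) (x : X) => t +ᵥ x) d) :
    CubeRelated ℝ (Fin d) x y := by
  refine cubeRelated_of_forall_dist_lt fun δ hδ => ?_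
  obtain ⟨x', y', hx', hy', t, ht⟩ := hxy δ hδ
  refine ⟨x', y', hx', hy', t, fun ε ⟨i, hi⟩ => ?_⟩
  have hne : (fun i => decide (i ∈ ε)) ≠ fun _ => false := fun h => by
    simpa [hi] using congrFun h i
  simpa [cubeForm_apply] using ht _ hne

end RegionalProximality

theorem fiber_power_subset_orbit_closure_of_pronilfactor_general
    {X : Type*} [MetricSpace X] [CompactSpace X] (φ : ℝ → X → X)
    (hφcont : ∀ t, Continuous (φ t))
    (hφ0 : ∀ x, φ 0 x = x) (hφadd : ∀ s t x, φ (s + t) x = φ s (φ t x))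
    (hXmin : ∀ x : X, Dense (Set.range fun t : ℝ => φ t x))
    (d : ℕ) (α : Fin d → ℝ) (hαinj : Function.Injective α) (hα0 : ∀ i, α i ≠ 0) :
    ∃ Ω : Set X, Dense Ω ∧ IsGδ Ω ∧ ∀ x ∈ Ω, ∀ f : Fin d → X,
      (∀ i, (x, f i) ∈ RPdFlow φ d) →
      f ∈ closure (Set.range fun t : ℝ => fun i => φ (α i * t) x) := by
  let : AddAction ℝ X := { vadd := φ, zero_vadd := hφ0, add_vadd := hφadd }
  have : ContinuousConstVAdd ℝ X := ⟨hφcont⟩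
  have : AddAction.IsMinimal ℝ X := ⟨hXmin⟩
  obtain ⟨Ω, hΩ, hGδ, hdense⟩ :=
    mem_residual.1 (eventually_residual_mem_closure_range_smul_vadd (X := X) (V := ℝ) hαinj hα0)
  exact ⟨Ω, hdense, hGδ, fun x hx f hf => hΩ hx f fun i => cubeRelated_of_mem_RPdFlow (hf i)⟩

/-- Let `(X,{T^t})` be a minimal `ℝ`-flow, `d ∈ ℕ`, and `π : X → Y` a factor map
between minimal `ℝ`-flows with `R_π = RP^[d](X,ℝ)`. Then for any distinct nonzero
reals `α₁,…,α_d` there is a dense `Gδ` set `Ω ⊆ X` such that for every `x ∈ Ω`,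
`(π⁻¹(π(x)))^d ⊆ cl{(T^{α₁ t} x, …, T^{α_d t} x) : t ∈ ℝ}`. -/
theorem fiber_power_subset_orbit_closure_of_pronilfactor
    {X Y : Type*} [MetricSpace X] [CompactSpace X] [MetricSpace Y] [CompactSpace Y]
    (φ : ℝ → X → X) (ψ : ℝ → Y → Y)
    (hφcont : Continuous fun p : ℝ × X => φ p.1 p.2)
    (hφ0 : ∀ x, φ 0 x = x) (hφadd : ∀ s t x, φ (s + t) x = φ s (φ t x))
    (hψcont : Continuous fun p : ℝ × Y => ψ p.1 p.2)
    (hψ0 : ∀ y, ψ 0 y = y) (hψadd : ∀ s t y, ψ (s + t) y = ψ s (ψ t y))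
    (hXmin : ∀ x : X, Dense (Set.range fun t : ℝ => φ t x))
    (hYmin : ∀ y : Y, Dense (Set.range fun t : ℝ => ψ t y))
    (π : X → Y) (hπcont : Continuous π) (hπsurj : Function.Surjective π)
    (hπfac : ∀ (t : ℝ) (x : X), π (φ t x) = ψ t (π x))
    (d : ℕ) (hRP : {p : X × X | π p.1 = π p.2} = RPdFlow φ d)
    (α : Fin d → ℝ) (hαinj : Function.Injective α) (hα0 : ∀ i, α i ≠ 0) :
    ∃ Ω : Set X, Dense Ω ∧ IsGδ Ω ∧ ∀ x ∈ Ω, ∀ f : Fin d → X,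
      (∀ i, π (f i) = π x) →
      f ∈ closure (Set.range fun t : ℝ => fun i => φ (α i * t) x) := by
  obtain ⟨Ω, hdense, hGδ, hΩ⟩ := fiber_power_subset_orbit_closure_of_pronilfactor_general φ
    (fun t => hφcont.comp (Continuous.prodMk_right t)) hφ0 hφadd hXmin d α hαinj hα0
  exact ⟨Ω, hdense, hGδ, fun x hx f hf => hΩ x hx f fun i => hRP ▸ (hf i).symm⟩
end

section
/- If (X,{T^t}_{t∈ℝ}) is a minimal ℝ-flow that is weakly mixing, then for each t ∈ ℝ∖{0} the discrete system (X,T^t) is minimal and weakly mixing. -/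
/-!
Let a commutative group `G` act on `X` and let `Γ ≤ G` be cocompact; for the time-`t` map,
`Γ = ℤ t ≤ ℝ`.

*Weak mixing.* Write `N(U, V)` for the set of `g` carrying some point of `U` into `V`. If `g` lies
in `N(U₁, U₂) ∩ N(V₁, V₂)` and `s` carries `x ∈ U₁ ∩ g⁻¹U₂` into `V₁ ∩ g⁻¹V₂`, then `s` carries `x`
into `V₁` and, by commutativity, `g x ∈ U₂` into `V₂`. Hence (Furstenberg) any finite intersection
of return-time sets of a weakly mixing action contains a return-time set. By continuity, every
`N(U, V)` then contains translates of `F + W` for a fixed neighbourhood `W` of `0` and all finite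
`F`. Cocompactness yields `F` with `F + W + Γ = G`, and every translate of `F + W` meets `Γ`.

*Minimality.* If `G x` is dense and `F + W + Γ = G`, the finitely many `Γ`-invariant sets `f W Γ x`,
`f ∈ F`, have dense union. As `Γ` acts transitively, one of them is dense, hence so is `W Γ x`.
Letting `W` shrink to `0` shows that `Γ x` is dense.
-/

open Set Filter Topology AddAction
open scoped Pointwise

/-- The set `N(U, V)` of elements of `M` carrying some point of `U` into `V`. -/
def returnTimes (M : Type*) {X : Type*} [VAdd M X] (U V : Set X) : Set M :=
  {m | ∃ x ∈ U, m +ᵥ x ∈ V}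

/-- An action is weakly mixing if its diagonal action on the square of the phase space is
topologically transitive. -/
abbrev IsWeaklyMixing (M X : Type*) [AddMonoid M] [TopologicalSpace X] [AddAction M X] : Prop :=
  IsTopologicallyTransitive M (X × X)

section AddMonoid

variable {M X : Type*} [AddMonoid M] [TopologicalSpace X] [AddAction M X]

theorem isWeaklyMixing_iff_returnTimes_inter_nonempty :
    IsWeaklyMixing M X ↔ ∀ {U₁ V₁ U₂ V₂ : Set X}, IsOpen U₁ → U₁.Nonempty → IsOpen V₁ →
      V₁.Nonempty → IsOpen U₂ → U₂.Nonempty → IsOpen V₂ → V₂.Nonempty →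
      (returnTimes M U₁ V₁ ∩ returnTimes M U₂ V₂).Nonempty := by
  rw [IsWeaklyMixing, isTopologicallyTransitive_iff]
  constructor
  · intro h U₁ V₁ U₂ V₂ hU₁ nU₁ hV₁ nV₁ hU₂ nU₂ hV₂ nV₂
    obtain ⟨m, _, ⟨⟨x₁, x₂⟩, ⟨hx₁, hx₂⟩, rfl⟩, hy₁, hy₂⟩ :=
      h (hU₁.prod hU₂) (nU₁.prod nU₂) (hV₁.prod hV₂) (nV₁.prod nV₂)
    exact ⟨m, ⟨x₁, hx₁, hy₁⟩, ⟨x₂, hx₂, hy₂⟩⟩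
  · rintro h U V hU ⟨⟨u₁, u₂⟩, hu⟩ hV ⟨⟨v₁, v₂⟩, hv⟩
    obtain ⟨U₁, U₂, hU₁, hU₂, hu₁, hu₂, hU₁₂⟩ := isOpen_prod_iff.1 hU u₁ u₂ hu
    obtain ⟨V₁, V₂, hV₁, hV₂, hv₁, hv₂, hV₁₂⟩ := isOpen_prod_iff.1 hV v₁ v₂ hv
    obtain ⟨m, ⟨x₁, hx₁, hy₁⟩, ⟨x₂, hx₂, hy₂⟩⟩ :=
      h hU₁ ⟨u₁, hu₁⟩ hV₁ ⟨v₁, hv₁⟩ hU₂ ⟨u₂, hu₂⟩ hV₂ ⟨v₂, hv₂⟩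
    exact ⟨m, m +ᵥ (x₁, x₂), vadd_mem_vadd_set (hU₁₂ ⟨hx₁, hx₂⟩), hV₁₂ ⟨hy₁, hy₂⟩⟩

theorem IsWeaklyMixing.isTopologicallyTransitive (h : IsWeaklyMixing M X) :
    IsTopologicallyTransitive M X where
  exists_vadd_inter hU nU hV nV := by
    obtain ⟨m, ⟨x, hx, hmx⟩, -⟩ :=
      isWeaklyMixing_iff_returnTimes_inter_nonempty.1 h hU nU hV nV hU nU hV nV
    exact ⟨m, m +ᵥ x, vadd_mem_vadd_set hx, hmx⟩

variable (M) [ContinuousConstVAdd M X] [IsTopologicallyTransitive M X]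

theorem dense_or_dense_of_dense_union {A B : Set X} (hA : ∀ m : M, m +ᵥ A ⊆ A)
    (hAB : Dense (A ∪ B)) : Dense A ∨ Dense B := by
  refine or_iff_not_imp_left.2 fun hnA ↦ ?_
  have hdense : Dense (closure A)ᶜ := by
    refine isClosed_closure.isOpen_compl.dense_of_preimage_vadd_invariant M ?_ fun m x hx hxA ↦ ?_
    · rwa [nonempty_compl, Ne, ← dense_iff_closure_eq]
    · exact hx (closure_mono (hA m) (vadd_closure_subset m A (vadd_mem_vadd_set hxA)))
  refine (hAB.inter_of_isOpen_right hdense isClosed_closure.isOpen_compl).mono ?_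
  rintro x ⟨hxA | hxB, hx⟩
  · exact absurd (subset_closure hxA) hx
  · exact hxB

theorem exists_dense_of_dense_biUnion [Nonempty X] {ι : Type*} {F : Set ι} (hF : F.Finite)
    {A : ι → Set X} (hA : ∀ i, ∀ m : M, m +ᵥ A i ⊆ A i) (hd : Dense (⋃ i ∈ F, A i)) :
    ∃ i ∈ F, Dense (A i) := by
  induction F, hF using Set.Finite.induction_on with
  | empty => exact absurd hd.nonempty (by simp)
  | insert _ _ ih =>
    rw [biUnion_insert] at hd
    rcases dense_or_dense_of_dense_union M (hA _) hd with h | h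
    · exact ⟨_, mem_insert _ _, h⟩
    · obtain ⟨i, hi, h⟩ := ih h
      exact ⟨i, mem_insert_of_mem _ hi, h⟩

end AddMonoid

section Commutative

variable {G X : Type*} [AddCommMonoid G] [TopologicalSpace X] [AddAction G X]
  [ContinuousConstVAdd G X]

namespace IsWeaklyMixing

theorem exists_returnTimes_subset_inter (h : IsWeaklyMixing G X) {U₁ V₁ U₂ V₂ : Set X}
    (hU₁ : IsOpen U₁) (nU₁ : U₁.Nonempty) (hV₁ : IsOpen V₁) (nV₁ : V₁.Nonempty)
    (hU₂ : IsOpen U₂) (nU₂ : U₂.Nonempty) (hV₂ : IsOpen V₂) (nV₂ : V₂.Nonempty) :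
    ∃ U V : Set X, IsOpen U ∧ U.Nonempty ∧ IsOpen V ∧ V.Nonempty ∧
      returnTimes G U V ⊆ returnTimes G U₁ V₁ ∩ returnTimes G U₂ V₂ := by
  obtain ⟨g, ⟨u, hu, hgu⟩, ⟨v, hv, hgv⟩⟩ :=
    isWeaklyMixing_iff_returnTimes_inter_nonempty.1 h hU₁ nU₁ hU₂ nU₂ hV₁ nV₁ hV₂ nV₂
  refine ⟨U₁ ∩ (g +ᵥ ·) ⁻¹' U₂, V₁ ∩ (g +ᵥ ·) ⁻¹' V₂,
    hU₁.inter (hU₂.preimage (continuous_const_vadd g)), ⟨u, hu, hgu⟩,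
    hV₁.inter (hV₂.preimage (continuous_const_vadd g)), ⟨v, hv, hgv⟩, ?_⟩
  rintro s ⟨x, ⟨hx, hgx⟩, hsx, hgsx⟩
  exact ⟨⟨x, hx, hsx⟩, ⟨g +ᵥ x, hgx, by rwa [vadd_comm]⟩⟩

theorem exists_returnTimes_subset_biInter [Nonempty X] (h : IsWeaklyMixing G X) {ι : Type*}
    {F : Set ι} (hF : F.Finite) {U V : ι → Set X} (hU : ∀ i, IsOpen (U i))
    (nU : ∀ i, (U i).Nonempty) (hV : ∀ i, IsOpen (V i)) (nV : ∀ i, (V i).Nonempty) :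
    ∃ A B : Set X, IsOpen A ∧ A.Nonempty ∧ IsOpen B ∧ B.Nonempty ∧
      returnTimes G A B ⊆ ⋂ i ∈ F, returnTimes G (U i) (V i) := by
  induction F, hF using Set.Finite.induction_on with
  | empty => exact ⟨univ, univ, isOpen_univ, univ_nonempty, isOpen_univ, univ_nonempty, by simp⟩
  | @insert i _ _ _ ih =>
    obtain ⟨A, B, hA, nA, hB, nB, hAB⟩ := ih
    obtain ⟨A', B', hA', nA', hB', nB', hAB'⟩ :=
      h.exists_returnTimes_subset_inter (hU i) (nU i) (hV i) (nV i) hA nA hB nB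
    refine ⟨A', B', hA', nA', hB', nB', hAB'.trans ?_⟩
    rw [biInter_insert]
    exact inter_subset_inter_right _ hAB

end IsWeaklyMixing

end Commutative

theorem exists_finite_add_add_eq_univ {G : Type*} [AddGroup G] [TopologicalSpace G]
    [SeparatelyContinuousAdd G] (Γ : AddSubgroup G) [CompactSpace (G ⧸ Γ)] {W : Set G}
    (hW : W ∈ 𝓝 0) : ∃ F : Set G, F.Finite ∧ F + W + (Γ : Set G) = univ := by
  obtain ⟨F, hF⟩ := isCompact_univ.elim_finite_subcover
    (fun g : G ↦ ((↑) : G → G ⧸ Γ) '' (g +ᵥ interior W))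
    (fun g ↦ QuotientAddGroup.isOpenMap_coe _ (isOpen_interior.vadd g))
    fun q _ ↦ by
      obtain ⟨g, rfl⟩ := QuotientAddGroup.mk_surjective q
      exact mem_iUnion.2 ⟨g, g, ⟨0, mem_interior_iff_mem_nhds.2 hW, add_zero g⟩, rfl⟩
  refine ⟨F, F.finite_toSet, eq_univ_of_forall fun g ↦ ?_⟩
  obtain ⟨f, hf, _, ⟨w, hw, rfl⟩, hfw⟩ := mem_iUnion₂.1 (hF (mem_univ (g : G ⧸ Γ)))
  exact ⟨f + w, add_mem_add hf (interior_subset hw), -(f + w) + g, QuotientAddGroup.eq.1 hfw,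
    add_neg_cancel_left _ g⟩

theorem dense_vadd_orbit_addSubgroup {G X : Type*} [AddCommGroup G] [TopologicalSpace G]
    [SeparatelyContinuousAdd G] [TopologicalSpace X] [AddAction G X] [ContinuousConstVAdd G X]
    (Γ : AddSubgroup G) [CompactSpace (G ⧸ Γ)] [IsTopologicallyTransitive Γ X] {x : X}
    (hx : Dense (orbit G x)) {W : Set G} (hW : W ∈ 𝓝 0) : Dense (W +ᵥ orbit Γ x) := by
  obtain ⟨F, hF, hcover⟩ := exists_finite_add_add_eq_univ Γ hW
  have hinv (f : G) (γ : Γ) : γ +ᵥ (f +ᵥ (W +ᵥ orbit Γ x)) ⊆ f +ᵥ (W +ᵥ orbit Γ x) := by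
    rw [vadd_comm γ f, vadd_comm γ W, vadd_orbit]
  have hunion : Dense (⋃ f ∈ F, f +ᵥ (W +ᵥ orbit Γ x)) := by
    refine hx.mono ?_
    rintro _ ⟨g, rfl⟩
    obtain ⟨_, ⟨f, hf, w, hw, rfl⟩, γ, hγ, rfl⟩ : g ∈ F + W + (Γ : Set G) := hcover ▸ mem_univ g
    refine mem_iUnion₂.2 ⟨f, hf, w +ᵥ γ +ᵥ x, vadd_mem_vadd hw ⟨⟨γ, hγ⟩, rfl⟩, ?_⟩
    simp only [add_vadd]
  have : Nonempty X := ⟨x⟩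
  have : ContinuousConstVAdd Γ X := ⟨fun γ ↦ continuous_const_vadd (γ : G)⟩
  obtain ⟨f, -, hf⟩ := exists_dense_of_dense_biUnion Γ hF hinv hunion
  simpa only [neg_vadd_vadd] using hf.vadd (-f)

theorem exists_nhds_zero_vadd_subset (G : Type*) {X : Type*} [AddMonoid G] [TopologicalSpace G]
    [TopologicalSpace X] [AddAction G X] [ContinuousVAdd G X] {U : Set X} (hU : IsOpen U) {x : X}
    (hx : x ∈ U) : ∃ W ∈ 𝓝 (0 : G), ∃ V : Set X, IsOpen V ∧ x ∈ V ∧ W +ᵥ V ⊆ U := by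
  have hmem : (fun p : G × X ↦ p.1 +ᵥ p.2) ⁻¹' U ∈ 𝓝 (0, x) :=
    (hU.preimage continuous_vadd).mem_nhds (by simpa only [mem_preimage, zero_vadd])
  obtain ⟨W, V, hW, h0W, hV, hxV, hWV⟩ := mem_nhds_prod_iff'.1 hmem
  exact ⟨W, hW.mem_nhds h0W, V, hV, hxV, vadd_subset_iff.2 fun w hw v hv ↦ hWV (mk_mem_prod hw hv)⟩

section ContinuousVAdd

variable {G X : Type*} [AddCommGroup G] [TopologicalSpace G] [TopologicalSpace X] [AddAction G X]
  [ContinuousVAdd G X]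

theorem IsWeaklyMixing.exists_nhds_zero_returnTimes_add_subset (h : IsWeaklyMixing G X)
    {U V : Set X} (hU : IsOpen U) (nU : U.Nonempty) (hV : IsOpen V) (nV : V.Nonempty) :
    ∃ W ∈ 𝓝 (0 : G), ∀ F : Set G, F.Finite → ∃ A B : Set X,
      IsOpen A ∧ A.Nonempty ∧ IsOpen B ∧ B.Nonempty ∧
        returnTimes G A B + (F + W) ⊆ returnTimes G U V := by
  obtain ⟨v, hv⟩ := nV
  obtain ⟨W, hW, V', hV', hvV', hWV'⟩ := exists_nhds_zero_vadd_subset G hV hv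
  refine ⟨W, hW, fun F hF ↦ ?_⟩
  have : Nonempty X := ⟨v⟩
  obtain ⟨A, B, hA, nA, hB, nB, hAB⟩ := h.exists_returnTimes_subset_biInter hF
    (U := fun f ↦ f +ᵥ U) (V := fun _ ↦ V') (fun f ↦ hU.vadd f) (fun _ ↦ nU.vadd_set)
    (fun _ ↦ hV') (fun _ ↦ ⟨v, hvV'⟩)
  refine ⟨A, B, hA, nA, hB, nB, ?_⟩
  rintro _ ⟨s, hs, _, ⟨f, hf, w, hw, rfl⟩, rfl⟩
  obtain ⟨_, ⟨u, hu, rfl⟩, hsu⟩ := mem_iInter₂.1 (hAB hs) f hf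
  refine ⟨u, hu, ?_⟩
  have hcomm : s + (f + w) = w + (s + f) := by abel
  change (s + (f + w)) +ᵥ u ∈ V
  rw [hcomm, add_vadd, add_vadd]
  exact hWV' (vadd_mem_vadd hw hsu)

variable (Γ : AddSubgroup G) [CompactSpace (G ⧸ Γ)]

theorem IsWeaklyMixing.addSubgroup [SeparatelyContinuousAdd G] (h : IsWeaklyMixing G X) :
    IsWeaklyMixing Γ X := by
  refine isWeaklyMixing_iff_returnTimes_inter_nonempty.2
    fun {U₁ V₁ U₂ V₂} hU₁ nU₁ hV₁ nV₁ hU₂ nU₂ hV₂ nV₂ ↦ ?_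
  obtain ⟨W₁, hW₁, hthick₁⟩ := h.exists_nhds_zero_returnTimes_add_subset hU₁ nU₁ hV₁ nV₁
  obtain ⟨W₂, hW₂, hthick₂⟩ := h.exists_nhds_zero_returnTimes_add_subset hU₂ nU₂ hV₂ nV₂
  obtain ⟨F, hF, hcover⟩ := exists_finite_add_add_eq_univ Γ (inter_mem hW₁ hW₂)
  obtain ⟨A₁, B₁, hA₁, nA₁, hB₁, nB₁, hsub₁⟩ := hthick₁ F hF
  obtain ⟨A₂, B₂, hA₂, nA₂, hB₂, nB₂, hsub₂⟩ := hthick₂ F hF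
  obtain ⟨s, hs₁, hs₂⟩ :=
    isWeaklyMixing_iff_returnTimes_inter_nonempty.1 h hA₁ nA₁ hB₁ nB₁ hA₂ nA₂ hB₂ nB₂
  obtain ⟨a, ha, γ, hγ, haγ : a + γ = -s⟩ : -s ∈ F + W₁ ∩ W₂ + (Γ : Set G) := hcover ▸ mem_univ _
  have hsaγ : s + a = -γ := by rw [eq_neg_iff_add_eq_zero, add_assoc, haγ, add_neg_cancel]
  exact ⟨⟨s + a, hsaγ ▸ neg_mem hγ⟩,
    hsub₁ (add_mem_add hs₁ (add_subset_add_left inter_subset_left ha)),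
    hsub₂ (add_mem_add hs₂ (add_subset_add_left inter_subset_right ha))⟩

theorem dense_orbit_addSubgroup [IsTopologicalAddGroup G] [IsTopologicallyTransitive Γ X] {x : X}
    (hx : Dense (orbit G x)) : Dense (orbit Γ x) := by
  refine dense_iff_inter_open.2 fun U hU ⟨y, hy⟩ ↦ ?_
  obtain ⟨W, hW, V, hV, hyV, hWV⟩ := exists_nhds_zero_vadd_subset G hU hy
  obtain ⟨_, hvV, w, hw, z, hz, rfl⟩ :=
    (dense_vadd_orbit_addSubgroup Γ hx (neg_mem_nhds_zero G hW)).inter_open_nonempty V hV ⟨y, hyV⟩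
  refine ⟨z, ?_, hz⟩
  simpa only [neg_vadd_vadd] using hWV (vadd_mem_vadd (mem_neg.1 hw) hvV)

end ContinuousVAdd

theorem compactSpace_quotient_zmultiples {t : ℝ} (ht : t ≠ 0) :
    CompactSpace (ℝ ⧸ AddSubgroup.zmultiples t) := by
  have : Fact (0 < |t|) := ⟨abs_pos.2 ht⟩
  rw [← zmultiples_abs]
  exact inferInstanceAs (CompactSpace (AddCircle |t|))

theorem time_t_minimal_and_weakly_mixing_of_weakly_mixing_flow_general
    {G H X : Type*} [AddCommGroup G] [TopologicalSpace G] [IsTopologicalAddGroup G] [AddGroup H]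
    [TopologicalSpace X] (φ : G → X → X)
    (hφcont : Continuous fun p : G × X => φ p.1 p.2)
    (hφ0 : ∀ x, φ 0 x = x) (hφadd : ∀ g g' x, φ (g + g') x = φ g (φ g' x))
    (hXmin : ∀ x : X, Dense (Set.range fun g : G => φ g x))
    (hwm : ∀ U V : Set (X × X), IsOpen U → IsOpen V → U.Nonempty → V.Nonempty →
      ∃ g : G, (((fun p : X × X => (φ g p.1, φ g p.2)) '' U) ∩ V).Nonempty)
    (ι : H →+ G) [CompactSpace (G ⧸ ι.range)] :
    (∀ x : X, Dense (Set.range fun h : H => φ (ι h) x)) ∧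
    (∀ U V : Set (X × X), IsOpen U → IsOpen V → U.Nonempty → V.Nonempty →
      ∃ h : H, (((fun p : X × X => (φ (ι h) p.1, φ (ι h) p.2)) '' U) ∩ V).Nonempty) := by
  let _ : AddAction G X := { vadd := φ, zero_vadd := hφ0, add_vadd := hφadd }
  have : ContinuousVAdd G X := ⟨hφcont⟩
  have hG : IsWeaklyMixing G X := ⟨fun hU nU hV nV ↦ hwm _ _ hU hV nU nV⟩
  have hH : IsWeaklyMixing ι.range X := hG.addSubgroup ι.range
  have := hH.isTopologicallyTransitive
  constructor
  · intro x
    refine (dense_orbit_addSubgroup ι.range (hXmin x)).mono ?_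
    rintro _ ⟨⟨_, h, rfl⟩, rfl⟩
    exact ⟨h, rfl⟩
  · intro U V hU hV nU nV
    obtain ⟨⟨_, h, rfl⟩, hUV⟩ := hH.exists_vadd_inter hU nU hV nV
    exact ⟨h, hUV⟩

/-- If `(X,{T^t})` is a minimal `ℝ`-flow that is weakly mixing (the product flow
on `X × X` is transitive), then for each `t ≠ 0` the discrete system `(X,T^t)` is
minimal and weakly mixing. -/
theorem time_t_minimal_and_weakly_mixing_of_weakly_mixing_flow
    {X : Type*} [MetricSpace X] [CompactSpace X]
    (φ : ℝ → X → X)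
    (hφcont : Continuous fun p : ℝ × X => φ p.1 p.2)
    (hφ0 : ∀ x, φ 0 x = x) (hφadd : ∀ s t x, φ (s + t) x = φ s (φ t x))
    (hXmin : ∀ x : X, Dense (Set.range fun t : ℝ => φ t x))
    (hwm : ∀ U V : Set (X × X), IsOpen U → IsOpen V → U.Nonempty → V.Nonempty →
      ∃ t : ℝ, (((fun p : X × X => (φ t p.1, φ t p.2)) '' U) ∩ V).Nonempty)
    (t : ℝ) (ht : t ≠ 0) :
    (∀ x : X, Dense (Set.range fun n : ℤ => φ (n * t) x)) ∧
    (∀ U V : Set (X × X), IsOpen U → IsOpen V → U.Nonempty → V.Nonempty →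
      ∃ n : ℤ, (((fun p : X × X => (φ (n * t) p.1, φ (n * t) p.2)) '' U) ∩ V).Nonempty)
    := by
  have : CompactSpace (ℝ ⧸ (zmultiplesHom ℝ t).range) := compactSpace_quotient_zmultiples ht
  simpa only [zmultiplesHom_apply, zsmul_eq_mul] using
    time_t_minimal_and_weakly_mixing_of_weakly_mixing_flow_general φ hφcont hφ0 hφadd hXmin hwm
      (zmultiplesHom ℝ t)
end
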